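/- arXiv:1902.03805 — 4 statements merged into one kernel-verified Lean document; each statement's English description precedes it below -/
import Mathlib

section
/- Let K be a compact metric space and k ≥ 1. Let μ_n and μ be centered Gaussian Borel probability measures on C(K,ℝ^k). If μ_n converges narrowly to μ, then the covariance functions K_{μ_n} converge to K_μ uniformly on K × K. -/
open MeasureTheory ProbabilityTheory Filter Topology

/-- A law `ν` on a finite-dimensional space `ι → ℝ` is a centered Gaussian measure if every
linear functional pushes it forward to a centered one-dimensional Gaussian distribution. -/
def IsCenteredGaussianLaw {ι : Type} [Fintype ι] (ν : Measure (ι → ℝ)) : Prop :=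
  ∀ c : ι → ℝ, ∃ v : NNReal, ν.map (fun x => ∑ i, c i * x i) = gaussianReal 0 v

/-- A Borel probability measure `μ` on `C(K, ℝ^k)` is a centered Gaussian measure if for all
finitely many points of `K` the pushforward of `μ` under the evaluation map is a centered
Gaussian measure on `ℝ^{jk}`. -/
def IsCenteredGaussianMeasure {K : Type} [MetricSpace K] [CompactSpace K] {k : ℕ}
    [MeasurableSpace C(K, Fin k → ℝ)] (μ : Measure C(K, Fin k → ℝ)) : Prop :=
  ∀ (j : ℕ) (p : Fin j → K),
    IsCenteredGaussianLaw (μ.map (fun f => fun q : Fin j × Fin k => f (p q.1) q.2))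

/-!
A centered Gaussian law on `ℝ` with variance `v` has characteristic function `exp (-v / 2)` at `1`,
so its second moment `-2 log ‖charFun 1‖` depends continuously on the law in the narrow topology.
The law of `X t` under `μ` is the image of `dirac t ⊗ μ` under `(t, ω) ↦ X t ω`, hence narrowly
continuous in `(μ, t)` jointly. By polarization the covariances are therefore jointly continuous in
the Gaussian measure and the pair of points, and compactness of `K × K` turns this into uniform
convergence.
-/

lemma tendstoUniformly_nhdsWithin_of_continuousOn_prod_univ {A T E : Type*} [TopologicalSpace A]
    [TopologicalSpace T] [CompactSpace T] [UniformSpace E] {F : A → T → E} {S : Set A} {a : A}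
    (hF : ContinuousOn (Function.uncurry F) (S ×ˢ Set.univ)) (ha : a ∈ S) :
    TendstoUniformly F (F a) (𝓝[S] a) := by
  intro u hu
  obtain ⟨V, hV, hVu⟩ := isCompact_univ.mem_uniformity_of_prod hF ha (symm_le_uniformity hu)
  filter_upwards [hV] with b hb t using hVu b hb t (Set.mem_univ t)

lemma continuous_probabilityMeasure_charFun {E : Type*} [NormedAddCommGroup E]
    [InnerProductSpace ℝ E] [MeasurableSpace E] [OpensMeasurableSpace E] (t : E) :
    Continuous fun ρ : ProbabilityMeasure E => charFun (ρ : Measure E) t := by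
  simp_rw [charFun_eq_integral_innerProbChar]
  exact continuous_iff_continuousAt.2 fun ρ =>
    (ProbabilityMeasure.tendsto_iff_forall_integral_rclike_tendsto ℂ).1 tendsto_id _

lemma norm_charFun_gaussianReal (m : ℝ) (v : NNReal) (t : ℝ) :
    ‖charFun (gaussianReal m v) t‖ = Real.exp (-(v * t ^ 2 / 2)) := by
  rw [charFun_gaussianReal, Complex.norm_exp]
  simp [← Complex.ofReal_pow]

lemma integral_sq_gaussianReal_zero (v : NNReal) : ∫ x, x ^ 2 ∂gaussianReal 0 v = v := by
  rw [← variance_of_integral_eq_zero aemeasurable_id' integral_id_gaussianReal,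
    variance_fun_id_gaussianReal]

lemma continuousOn_integral_sq_of_eq_gaussianReal_zero :
    ContinuousOn (fun ρ : ProbabilityMeasure ℝ => ∫ x, x ^ 2 ∂(ρ : Measure ℝ))
      {ρ | ∃ v, (ρ : Measure ℝ) = gaussianReal 0 v} := by
  have hlog : ContinuousOn
      (fun ρ : ProbabilityMeasure ℝ => -2 * Real.log ‖charFun (ρ : Measure ℝ) 1‖)
      {ρ | ∃ v, (ρ : Measure ℝ) = gaussianReal 0 v} := by
    refine ((continuous_probabilityMeasure_charFun 1).norm.continuousOn.log ?_).const_mul (-2)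
    rintro ρ ⟨v, hv⟩
    rw [hv, norm_charFun_gaussianReal]
    exact Real.exp_ne_zero _
  refine hlog.congr ?_
  rintro ρ ⟨v, hv⟩
  simp only [hv, integral_sq_gaussianReal_zero, norm_charFun_gaussianReal, Real.log_exp]
  ring

section SecondMoment

variable {Ω : Type*} [MeasurableSpace Ω] {P : Measure Ω} {X Y : Ω → ℝ}

lemma memLp_of_hasLaw_gaussianReal {m : ℝ} {v : NNReal} (hX : HasLaw X (gaussianReal m v) P)
    (p : NNReal) : MemLp X p P := by
  have hid : MemLp id p (P.map X) := hX.map_eq ▸ memLp_id_gaussianReal p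
  exact hid.comp_of_map hX.aemeasurable

lemma integral_mul_eq_integral_sq_add_sub_integral_sq_sub
    (hadd : Integrable (fun ω => (X ω + Y ω) ^ 2) P)
    (hsub : Integrable (fun ω => (X ω - Y ω) ^ 2) P) :
    ∫ ω, X ω * Y ω ∂P = (∫ ω, (X ω + Y ω) ^ 2 ∂P - ∫ ω, (X ω - Y ω) ^ 2 ∂P) / 4 := by
  rw [← integral_sub hadd hsub, ← integral_div]
  congr with ω
  ring

end SecondMoment

lemma map_diracProba_prod {T Ω Y : Type*} [MeasurableSpace T] [MeasurableSpace Ω]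
    [MeasurableSpace Y] {X : T → Ω → Y} (hX : Measurable (Function.uncurry X))
    (μ : ProbabilityMeasure Ω) (t : T) :
    ((diracProba t).prod μ).map hX.aemeasurable =
      μ.map (hX.comp measurable_prodMk_left : Measurable (X t)).aemeasurable := by
  apply Subtype.ext
  change ((Measure.dirac t).prod (μ : Measure Ω)).map _ = (μ : Measure Ω).map (X t)
  rw [Measure.dirac_prod, Measure.map_map hX measurable_prodMk_left]
  rfl

section ParametrizedFamily

variable {T Ω : Type*}
  [TopologicalSpace T] [SecondCountableTopology T] [TopologicalSpace.PseudoMetrizableSpace T]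
  [TopologicalSpace Ω] [SecondCountableTopology Ω] [TopologicalSpace.PseudoMetrizableSpace Ω]
  [MeasurableSpace Ω] [OpensMeasurableSpace Ω]

lemma continuous_probabilityMeasure_map_of_continuous_uncurry {Y : Type*} [TopologicalSpace Y]
    [MeasurableSpace Y] [BorelSpace Y] {X : T → Ω → Y} (hX : Continuous (Function.uncurry X)) :
    Continuous fun p : ProbabilityMeasure Ω × T =>
      p.1.map (hX.uncurry_left p.2).measurable.aemeasurable := by
  borelize T
  have hprod : Continuous fun p : ProbabilityMeasure Ω × T => (diracProba p.2).prod p.1 :=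
    ProbabilityMeasure.continuous_prod.comp
      ((continuous_diracProba.comp continuous_snd).prodMk continuous_fst)
  exact ((ProbabilityMeasure.continuous_map hX).comp hprod).congr fun p =>
    map_diracProba_prod hX.measurable p.1 p.2

lemma continuousOn_integral_sq_of_hasLaw_gaussianReal_zero {X : T → Ω → ℝ}
    (hX : Continuous (Function.uncurry X)) :
    ContinuousOn (fun p : ProbabilityMeasure Ω × T => ∫ ω, X p.2 ω ^ 2 ∂(p.1 : Measure Ω))
      {p | ∃ v, HasLaw (X p.2) (gaussianReal 0 v) (p.1 : Measure Ω)} := by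
  refine (continuousOn_integral_sq_of_eq_gaussianReal_zero.comp
    (continuous_probabilityMeasure_map_of_continuous_uncurry hX).continuousOn ?_).congr ?_
  · rintro p ⟨v, hv⟩
    exact ⟨v, hv.map_eq⟩
  · intro p _
    exact (integral_map (hX.uncurry_left p.2).measurable.aemeasurable
      (continuous_pow 2).aestronglyMeasurable).symm

lemma continuousOn_integral_mul_of_hasLaw_gaussianReal_zero {X Y : T → Ω → ℝ}
    (hX : Continuous (Function.uncurry X)) (hY : Continuous (Function.uncurry Y)) :
    ContinuousOn (fun p : ProbabilityMeasure Ω × T => ∫ ω, X p.2 ω * Y p.2 ω ∂(p.1 : Measure Ω))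
      {p | (∃ v, HasLaw (fun ω => X p.2 ω + Y p.2 ω) (gaussianReal 0 v) (p.1 : Measure Ω)) ∧
        ∃ v, HasLaw (fun ω => X p.2 ω - Y p.2 ω) (gaussianReal 0 v) (p.1 : Measure Ω)} := by
  have hadd := continuousOn_integral_sq_of_hasLaw_gaussianReal_zero
    (X := fun t ω => X t ω + Y t ω) (hX.add hY)
  have hsub := continuousOn_integral_sq_of_hasLaw_gaussianReal_zero
    (X := fun t ω => X t ω - Y t ω) (hX.sub hY)
  refine (((hadd.mono fun p hp => hp.1).sub (hsub.mono fun p hp => hp.2)).div_const 4).congr ?_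
  rintro p ⟨⟨_, hv⟩, ⟨_, hw⟩⟩
  exact integral_mul_eq_integral_sq_add_sub_integral_sq_sub
    (memLp_of_hasLaw_gaussianReal hv 2).integrable_sq
    (memLp_of_hasLaw_gaussianReal hw 2).integrable_sq

end ParametrizedFamily

section GaussianMeasure

variable {K : Type} [MetricSpace K] [CompactSpace K] {k : ℕ}
  [MeasurableSpace C(K, Fin k → ℝ)] [OpensMeasurableSpace C(K, Fin k → ℝ)]

lemma IsCenteredGaussianMeasure.exists_hasLaw_mul_eval_add_mul_eval {μ : Measure C(K, Fin k → ℝ)}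
    (hμ : IsCenteredGaussianMeasure μ) (p q : K) (i j : Fin k) (a b : ℝ) :
    ∃ v, HasLaw (fun f : C(K, Fin k → ℝ) => a * f p i + b * f q j) (gaussianReal 0 v) μ := by
  have heval (p : K) (i : Fin k) : Measurable fun f : C(K, Fin k → ℝ) => f p i :=
    Continuous.measurable <| by fun_prop
  obtain ⟨v, hv⟩ := hμ 2 ![p, q] (Pi.single (0, i) a + Pi.single (1, j) b)
  refine ⟨v, (((heval p i).const_mul a).add ((heval q j).const_mul b)).aemeasurable, ?_⟩
  rw [← hv, Measure.map_map (by fun_prop) (measurable_pi_iff.2 fun r => heval _ _)]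
  congr 1 with f
  simp [add_mul, Finset.sum_add_distrib, Pi.single_apply]

lemma continuousOn_integral_mul_of_isCenteredGaussianMeasure (i j : Fin k) :
    ContinuousOn (fun p : ProbabilityMeasure C(K, Fin k → ℝ) × (K × K) =>
        ∫ f, f p.2.1 i * f p.2.2 j ∂(p.1 : Measure C(K, Fin k → ℝ)))
      ({μ : ProbabilityMeasure C(K, Fin k → ℝ) |
        IsCenteredGaussianMeasure (μ : Measure C(K, Fin k → ℝ))} ×ˢ Set.univ) := by
  refine (continuousOn_integral_mul_of_hasLaw_gaussianReal_zero
    (X := fun (pq : K × K) (f : C(K, Fin k → ℝ)) => f pq.1 i)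
    (Y := fun (pq : K × K) (f : C(K, Fin k → ℝ)) => f pq.2 j)
    (by simp only [Function.uncurry_def]; fun_prop)
    (by simp only [Function.uncurry_def]; fun_prop)).mono ?_
  rintro ⟨μ, p, q⟩ ⟨(hμ : IsCenteredGaussianMeasure (μ : Measure C(K, Fin k → ℝ))), -⟩
  exact ⟨by simpa using hμ.exists_hasLaw_mul_eval_add_mul_eval p q i j 1 1,
    by simpa [← sub_eq_add_neg] using hμ.exists_hasLaw_mul_eval_add_mul_eval p q i j 1 (-1)⟩

theorem covariance_tendstoUniformly_of_narrow_tendsto_general {ι : Type*} {l : Filter ι}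
    {μ : ι → ProbabilityMeasure C(K, Fin k → ℝ)} {ν : ProbabilityMeasure C(K, Fin k → ℝ)}
    (hμ : ∀ n, IsCenteredGaussianMeasure (μ n : Measure C(K, Fin k → ℝ)))
    (hν : IsCenteredGaussianMeasure (ν : Measure C(K, Fin k → ℝ)))
    (hlim : Tendsto μ l (𝓝 ν)) (i j : Fin k) :
    TendstoUniformly
      (fun n (pq : K × K) => ∫ f, f pq.1 i * f pq.2 j ∂(μ n : Measure C(K, Fin k → ℝ)))
      (fun pq : K × K => ∫ f, f pq.1 i * f pq.2 j ∂(ν : Measure C(K, Fin k → ℝ))) l := by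
  have hcont := tendstoUniformly_nhdsWithin_of_continuousOn_prod_univ
    (F := fun (ρ : ProbabilityMeasure C(K, Fin k → ℝ)) (pq : K × K) =>
      ∫ f, f pq.1 i * f pq.2 j ∂(ρ : Measure C(K, Fin k → ℝ)))
    (continuousOn_integral_mul_of_isCenteredGaussianMeasure i j) hν
  have hlim' : Tendsto μ l (𝓝[{ρ | IsCenteredGaussianMeasure (ρ : Measure C(K, Fin k → ℝ))}] ν) :=
    tendsto_nhdsWithin_iff.2 ⟨hlim, Eventually.of_forall hμ⟩
  exact fun u hu => hlim'.eventually (hcont u hu)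

end GaussianMeasure

/-- If a sequence of centered Gaussian Borel probability measures on `C(K, ℝ^k)` (`K` a compact
metric space, `k ≥ 1`) converges narrowly to a centered Gaussian measure `ν`, then the
covariance functions converge (entrywise) uniformly on `K × K` to that of `ν`. -/
theorem covariance_tendstoUniformly_of_narrow_tendsto
    {K : Type} [MetricSpace K] [CompactSpace K] {k : ℕ} (hk : 1 ≤ k)
    [MeasurableSpace C(K, Fin k → ℝ)] [BorelSpace C(K, Fin k → ℝ)]
    (μ : ℕ → Measure C(K, Fin k → ℝ)) (ν : Measure C(K, Fin k → ℝ))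
    (hμP : ∀ n, IsProbabilityMeasure (μ n)) (hνP : IsProbabilityMeasure ν)
    (hμG : ∀ n, IsCenteredGaussianMeasure (μ n)) (hνG : IsCenteredGaussianMeasure ν)
    (hnarrow : ∀ φ : BoundedContinuousFunction C(K, Fin k → ℝ) ℝ,
      Tendsto (fun n => ∫ f, φ f ∂(μ n)) atTop (𝓝 (∫ f, φ f ∂ν))) :
    ∀ i j : Fin k,
      TendstoUniformly (fun n (pq : K × K) => ∫ f, f pq.1 i * f pq.2 j ∂(μ n))
        (fun pq : K × K => ∫ f, f pq.1 i * f pq.2 j ∂ν) atTop :=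
  covariance_tendstoUniformly_of_narrow_tendsto_general (μ := fun n => ⟨μ n, hμP n⟩)
    (ν := ⟨ν, hνP⟩) hμG hνG (ProbabilityMeasure.tendsto_iff_forall_integral_tendsto.2 hnarrow)
end

section
/- Let K be a compact metric space and let X be a centered Gaussian process on K with values in ℝ^k, defined on a probability space (Ω,P), with almost surely continuous sample paths, so that X defines a random element of C(K,ℝ^k). Let K_X(p,q) = E[X(p)X(q)^T] be its covariance function, and for p ∈ K and j ∈ {1,…,k} define h_p^j ∈ C(K,ℝ^k) by h_p^j(q) = (K_X(q,p)^{1j},…,K_X(q,p)^{kj}). Then the support of the law of X in C(K,ℝ^k) equals the closure in C(K,ℝ^k) of the linear span of {h_p^j : p ∈ K, j = 1,…,k}. -/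
open MeasureTheory ProbabilityTheory Filter Topology

/-- The (topological) support of a Borel measure: the set of points all of whose open
neighborhoods have positive measure. -/
def measureSupport {E : Type} [TopologicalSpace E] [MeasurableSpace E] (μ : Measure E) :
    Set E :=
  {x | ∀ U : Set E, IsOpen U → x ∈ U → 0 < μ U}

/-!
Gaussianity enters through one symmetry: if `x` and `y` are independent copies of a centered
Gaussian vector, then so are `cos θ • x + sin θ • y` and `-sin θ • x + cos θ • y`. By this symmetry
the support is a closed linear subspace and, by Fernique's theorem, the law has a second moment, so
that the covariance operator `R φ = E[φ(X) X]` is defined. Each `R φ` lies in the support, being an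
average of points of it. Conversely, if `φ` vanishes on the vectors `R ℓ` for a separating family
of functionals `ℓ`, then `ℓ (R φ) = φ (R ℓ) = 0` gives `R φ = 0`, hence `E[φ(X)²] = φ (R φ) = 0`,
and `φ` vanishes on the support; Hahn–Banach concludes. On `C(K, ℝ^k)` the coordinate evaluations
are a separating family, and `R` maps them to the functions `h p j`.
-/

open ContinuousLinearMap (rotation)
open scoped NNReal

section Support

variable {α β : Type*} [TopologicalSpace α] [MeasurableSpace α] [TopologicalSpace β]
  [MeasurableSpace β]

lemma measureSupport_eq_support {E : Type} [TopologicalSpace E] [MeasurableSpace E]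
    (μ : Measure E) : measureSupport μ = μ.support := by
  ext x
  rw [(nhds_basis_opens x).mem_measureSupport]
  exact ⟨fun hx U hU => hx U hU.2 hU.1, fun hx U hU hxU => hx U ⟨hxU, hU⟩⟩

lemma prodMk_mem_support_prod {μ : Measure α} {ν : Measure β} [SFinite ν] {x : α} {y : β}
    (hx : x ∈ μ.support) (hy : y ∈ ν.support) : (x, y) ∈ (μ.prod ν).support := by
  rw [((𝓝 x).basis_sets.prod_nhds (𝓝 y).basis_sets).mem_measureSupport]
  rintro ⟨U, V⟩ ⟨hU, hV⟩
  rw [Measure.mem_support_iff_forall] at hx hy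
  simpa [Measure.prod_prod] using ⟨hx U hU, hy V hV⟩

lemma map_mem_support_map [OpensMeasurableSpace α] [BorelSpace β] {μ : Measure α} {f : α → β}
    (hf : Continuous f) {x : α} (hx : x ∈ μ.support) : f x ∈ (μ.map f).support := by
  rw [(nhds_basis_opens _).mem_measureSupport]
  rintro U ⟨hxU, hU⟩
  rw [Measure.map_apply hf.measurable hU.measurableSet]
  exact (Measure.mem_support_iff_forall x).1 hx _ (hf.continuousAt (hU.mem_nhds hxU))

end Support

lemma mem_closure_span_of_forall_dual {E : Type*} [AddCommGroup E] [Module ℝ E]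
    [TopologicalSpace E] [IsTopologicalAddGroup E] [ContinuousSMul ℝ E] [LocallyConvexSpace ℝ E]
    {s : Set E} {x : E} (hx : ∀ φ : StrongDual ℝ E, (∀ y ∈ s, φ y = 0) → φ x = 0) :
    x ∈ closure (Submodule.span ℝ s : Set E) := by
  by_contra hxs
  obtain ⟨φ, u, hφu, hux⟩ := geometric_hahn_banach_closed_point
    (Submodule.span ℝ s).convex.closure isClosed_closure hxs
  have hu : 0 < u := by simpa using hφu 0 (subset_closure (zero_mem _))
  have hφs : ∀ y ∈ s, φ y = 0 := by
    intro y hy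
    by_contra hne
    have := hφu ((u / φ y) • y)
      (subset_closure (Submodule.smul_mem _ _ (Submodule.subset_span hy)))
    rw [map_smul, smul_eq_mul, div_mul_cancel₀ _ hne] at this
    exact this.false
  exact (hu.trans hux).ne' (hx φ hφs)

section CovarianceVector

variable {E : Type*} [NormedAddCommGroup E] [NormedSpace ℝ E] [MeasurableSpace E]
  {μ : Measure E} {φ : StrongDual ℝ E}

/-- The image `∫ φ(x) x dμ(x)` of a functional `φ` under the covariance operator of a centered
measure `μ` on a Banach space. No mean is subtracted, and the value is meaningful when `μ` has a
finite second moment. -/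
noncomputable def covarianceVector (μ : Measure E) (φ : StrongDual ℝ E) : E :=
  ∫ x, φ x • x ∂μ

lemma integrable_dual_smul_id [OpensMeasurableSpace E] (hμ : MemLp id 2 μ) (φ : StrongDual ℝ E) :
    Integrable (fun x => φ x • x) μ :=
  memLp_one_iff_integrable.1 (hμ.smul (φ.comp_memLp' hμ))

variable [OpensMeasurableSpace E] [CompleteSpace E]

lemma apply_covarianceVector (hμ : MemLp id 2 μ) (φ ψ : StrongDual ℝ E) :
    ψ (covarianceVector μ φ) = ∫ x, ψ x * φ x ∂μ := by
  rw [covarianceVector, ← ψ.integral_comp_comm (integrable_dual_smul_id hμ φ)]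
  simp only [map_smul, smul_eq_mul, mul_comm]

lemma apply_covarianceVector_comm (hμ : MemLp id 2 μ) (φ ψ : StrongDual ℝ E) :
    ψ (covarianceVector μ φ) = φ (covarianceVector μ ψ) := by
  simp only [apply_covarianceVector hμ, mul_comm]

lemma ae_eq_zero_of_covarianceVector_eq_zero (hμ : MemLp id 2 μ)
    (hφ : covarianceVector μ φ = 0) : φ =ᵐ[μ] 0 := by
  have hsq : ∫ x, φ x * φ x ∂μ = 0 := by rw [← apply_covarianceVector hμ, hφ, map_zero]
  have hL2 : MemLp φ 2 μ := φ.comp_memLp' hμ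
  rw [integral_eq_zero_iff_of_nonneg (fun x => mul_self_nonneg _) (hL2.integrable_mul hL2)] at hsq
  filter_upwards [hsq] with x hx using mul_self_eq_zero.1 hx

end CovarianceVector

section RotationInvariance

variable {E : Type*} [NormedAddCommGroup E] [NormedSpace ℝ E] [MeasurableSpace E]
  {μ : Measure E}

/-- The law of a pair of independent copies drawn from `μ` is invariant under all rotations of the
plane of the pair, as happens for every centered Gaussian measure. -/
def IsRotationInvariant (μ : Measure E) : Prop :=
  ∀ θ : ℝ, (μ.prod μ).map (rotation θ) = μ.prod μ

namespace IsRotationInvariant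

variable [BorelSpace E] [SecondCountableTopology E]

lemma memLp_two_id [IsFiniteMeasure μ] (hμ : IsRotationInvariant μ) : MemLp id 2 μ := by
  obtain ⟨C, hC, hexp⟩ := exists_integrable_exp_sq_of_map_rotation_eq_self (hμ _)
  rw [memLp_two_iff_integrable_sq_norm (by fun_prop)]
  refine (hexp.const_mul C⁻¹).mono' (by fun_prop) (ae_of_all _ fun x => ?_)
  rw [Real.norm_of_nonneg (by positivity), id, le_inv_mul_iff₀ hC]
  linarith [Real.add_one_le_exp (C * ‖x‖ ^ 2)]

variable [IsProbabilityMeasure μ] {x y : E}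

lemma map_cos_smul_add_sin_smul (hμ : IsRotationInvariant μ) (θ : ℝ) :
    (μ.prod μ).map (fun p => Real.cos θ • p.1 + Real.sin θ • p.2) = μ := by
  calc (μ.prod μ).map (fun p => Real.cos θ • p.1 + Real.sin θ • p.2)
      = ((μ.prod μ).map (rotation θ)).map Prod.fst :=
        by rw [Measure.map_map measurable_fst (by fun_prop)]; rfl
    _ = μ := by rw [hμ θ, Measure.map_fst_prod, measure_univ, one_smul]

lemma cos_smul_add_sin_smul_mem_support (hμ : IsRotationInvariant μ) (θ : ℝ)
    (hx : x ∈ μ.support) (hy : y ∈ μ.support) :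
    Real.cos θ • x + Real.sin θ • y ∈ μ.support := by
  have := map_mem_support_map (f := fun p : E × E => Real.cos θ • p.1 + Real.sin θ • p.2)
    (by fun_prop) (prodMk_mem_support_prod hx hy)
  rwa [hμ.map_cos_smul_add_sin_smul] at this

lemma zero_mem_support (hμ : IsRotationInvariant μ) : (0 : E) ∈ μ.support := by
  obtain ⟨x, hx⟩ := Measure.nonempty_support (IsProbabilityMeasure.ne_zero μ)
  simpa using hμ.cos_smul_add_sin_smul_mem_support (-(Real.pi / 4)) hx hx

lemma smul_mem_support_of_abs_le_one (hμ : IsRotationInvariant μ) {c : ℝ} (hc : |c| ≤ 1)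
    (hx : x ∈ μ.support) : c • x ∈ μ.support := by
  obtain ⟨hc₁, hc₂⟩ := abs_le.1 hc
  simpa [Real.cos_arccos hc₁ hc₂] using
    hμ.cos_smul_add_sin_smul_mem_support (Real.arccos c) hx hμ.zero_mem_support

lemma add_mem_support (hμ : IsRotationInvariant μ) (hx : x ∈ μ.support) (hy : y ∈ μ.support) :
    x + y ∈ μ.support := by
  have hsqrt : √2 / 2 * (√2 / 2) + √2 / 2 * (√2 / 2) = 1 := by
    linarith [Real.mul_self_sqrt (zero_le_two (α := ℝ))]
  have hmid := hμ.cos_smul_add_sin_smul_mem_support (Real.pi / 4) hx hy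
  -- One rotation gives `m = (x + y) / √2`; the same rotation applied to `(m, m)` gives `√2 • m`.
  have := hμ.cos_smul_add_sin_smul_mem_support (Real.pi / 4) hmid hmid
  simp only [Real.cos_pi_div_four, Real.sin_pi_div_four] at this
  convert this using 1
  match_scalars <;> linear_combination -hsqrt

lemma nsmul_mem_support (hμ : IsRotationInvariant μ) (n : ℕ) (hx : x ∈ μ.support) :
    n • x ∈ μ.support := by
  induction n with
  | zero => simpa using hμ.zero_mem_support
  | succ n ih => simpa only [succ_nsmul] using hμ.add_mem_support ih hx

lemma smul_mem_support (hμ : IsRotationInvariant μ) (c : ℝ) (hx : x ∈ μ.support) :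
    c • x ∈ μ.support := by
  obtain ⟨n, hn⟩ := exists_nat_gt |c|
  have hn₀ : (0 : ℝ) < n := (abs_nonneg c).trans_lt hn
  have hcn : |c / n| ≤ 1 := by
    rw [abs_div, Nat.abs_cast, div_le_one hn₀]
    exact hn.le
  have := hμ.smul_mem_support_of_abs_le_one hcn (hμ.nsmul_mem_support n hx)
  rwa [← Nat.cast_smul_eq_nsmul ℝ, smul_smul, div_mul_cancel₀ _ hn₀.ne'] at this

/-- The support of a rotation invariant probability measure, as a linear subspace. -/
def supportSubmodule (hμ : IsRotationInvariant μ) : Submodule ℝ E where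
  carrier := μ.support
  zero_mem' := hμ.zero_mem_support
  add_mem' := hμ.add_mem_support
  smul_mem' c _ := hμ.smul_mem_support c

variable [CompleteSpace E]

lemma covarianceVector_mem_support (hμ : IsRotationInvariant μ) (φ : StrongDual ℝ E) :
    covarianceVector μ φ ∈ μ.support :=
  hμ.supportSubmodule.convex.integral_mem Measure.isClosed_support
    (Filter.mem_of_superset Measure.support_mem_ae fun _ hx => hμ.smul_mem_support (φ _) hx)
    (integrable_dual_smul_id hμ.memLp_two_id φ)

theorem support_eq_closure_span_covarianceVector (hμ : IsRotationInvariant μ) {ι : Type*}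
    {ℓ : ι → StrongDual ℝ E} (hℓ : ∀ x, (∀ i, ℓ i x = 0) → x = 0) :
    μ.support =
      closure (Submodule.span ℝ (Set.range fun i => covarianceVector μ (ℓ i)) : Set E) := by
  have hL2 := hμ.memLp_two_id
  apply subset_antisymm
  · refine fun x hx => mem_closure_span_of_forall_dual fun φ hφ => ?_
    have hφ₀ : covarianceVector μ φ = 0 := hℓ _ fun i => by
      rw [apply_covarianceVector_comm hL2]
      exact hφ _ ⟨i, rfl⟩
    exact Measure.support_subset_of_isClosed (isClosed_eq φ.continuous continuous_const)
      (ae_eq_zero_of_covarianceVector_eq_zero hL2 hφ₀) hx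
  · refine closure_minimal ?_ Measure.isClosed_support
    change Submodule.span ℝ _ ≤ hμ.supportSubmodule
    rw [Submodule.span_le]
    rintro _ ⟨i, rfl⟩
    exact hμ.covarianceVector_mem_support (ℓ i)

end IsRotationInvariant
end RotationInvariance

section GaussianFunctionals

variable {E : Type*} [NormedAddCommGroup E] [NormedSpace ℝ E] [MeasurableSpace E] [BorelSpace E]

lemma ext_of_charFunDual_eq_on_separating [SecondCountableTopology E] [CompleteSpace E]
    {μ ν : Measure E} [IsFiniteMeasure μ] [IsFiniteMeasure ν] {V : Submodule ℝ (StrongDual ℝ E)}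
    (hV : ∀ x, (∀ L ∈ V, L x = 0) → x = 0)
    (h : ∀ L ∈ V, charFunDual μ L = charFunDual ν L) : μ = ν := by
  let B : E →ₗ[ℝ] V →ₗ[ℝ] ℝ := (ContinuousLinearMap.coeLM ℝ ∘ₗ V.subtype).flip
  refine ext_of_integral_char_eq Real.continuous_probChar Real.probChar_ne_one (L := B)
    (fun x hx hBx => hx (hV x fun L hL => LinearMap.congr_fun hBx (⟨L, hL⟩ : V)))
    (isBoundedBilinearMap_apply.symm.continuous.comp
      (continuous_fst.prodMk (continuous_subtype_val.comp continuous_snd))) ?_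
  exact fun L => h L.1 L.2

variable {μ : Measure E}

lemma memLp_two_of_map_eq_gaussianReal {A : StrongDual ℝ E} {m : ℝ} {v : ℝ≥0}
    (hA : μ.map A = gaussianReal m v) : MemLp A 2 μ := by
  have : MemLp id 2 (μ.map A) := hA ▸ memLp_id_gaussianReal 2
  exact (memLp_map_measure_iff aestronglyMeasurable_id (by fun_prop)).1 this

lemma charFunDual_eq_exp_of_map_eq_gaussianReal {A : StrongDual ℝ E} {v : ℝ≥0}
    (hA : μ.map A = gaussianReal 0 v) :
    charFunDual μ A = Complex.exp (-(∫ x, A x ^ 2 ∂μ : ℝ) / 2) := by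
  have hv : ∫ x, A x ^ 2 ∂μ = v := by
    calc ∫ x, A x ^ 2 ∂μ = ∫ t, t ^ 2 ∂gaussianReal 0 v := by
          rw [← hA, integral_map (by fun_prop) (by fun_prop)]
      _ = Var[fun t => t; gaussianReal 0 v] :=
          (variance_of_integral_eq_zero (by fun_prop) integral_id_gaussianReal).symm
      _ = v := variance_fun_id_gaussianReal
  rw [charFunDual_eq_charFun_map_one, hA, charFun_gaussianReal, hv]
  simp [neg_div]

lemma integral_sq_rotate {α : Type*} [MeasurableSpace α] {ν : Measure α} {f g : α → ℝ}
    (hf : MemLp f 2 ν) (hg : MemLp g 2 ν) (θ : ℝ) :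
    ∫ x, (Real.cos θ * f x - Real.sin θ * g x) ^ 2 ∂ν +
        ∫ x, (Real.sin θ * f x + Real.cos θ * g x) ^ 2 ∂ν =
      ∫ x, f x ^ 2 ∂ν + ∫ x, g x ^ 2 ∂ν := by
  have hfst : Integrable (fun x => (Real.cos θ * f x - Real.sin θ * g x) ^ 2) ν :=
    ((hf.const_mul _).sub (hg.const_mul _)).integrable_sq
  have hsnd : Integrable (fun x => (Real.sin θ * f x + Real.cos θ * g x) ^ 2) ν :=
    ((hf.const_mul _).add (hg.const_mul _)).integrable_sq
  rw [← integral_add hfst hsnd, ← integral_add hf.integrable_sq hg.integrable_sq]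
  congr with x
  linear_combination (f x ^ 2 + g x ^ 2) * Real.cos_sq_add_sin_sq θ

lemma charFunDual_map_rotation_prod [SecondCountableTopology E] [SFinite μ] (θ : ℝ)
    (L : StrongDual ℝ (E × E)) :
    charFunDual ((μ.prod μ).map (rotation θ)) L =
      charFunDual μ (Real.cos θ • L.comp (.inl ℝ E E) - Real.sin θ • L.comp (.inr ℝ E E)) *
        charFunDual μ (Real.sin θ • L.comp (.inl ℝ E E) + Real.cos θ • L.comp (.inr ℝ E E)) := by
  rw [charFunDual_map, charFunDual_prod]
  congr 2 <;> ext x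
  · calc L (rotation θ (x, 0))
        = L (Real.cos θ • (x, 0) - Real.sin θ • (0, x)) := by
          simp [ContinuousLinearMap.rotation_apply]
      _ = Real.cos θ * L (x, 0) - Real.sin θ * L (0, x) := by
          rw [map_sub, map_smul, map_smul, smul_eq_mul, smul_eq_mul]
  · calc L (rotation θ (0, x))
        = L (Real.sin θ • (x, 0) + Real.cos θ • (0, x)) := by
          simp [ContinuousLinearMap.rotation_apply]
      _ = Real.sin θ * L (x, 0) + Real.cos θ * L (0, x) := by
          rw [map_add, map_smul, map_smul, smul_eq_mul, smul_eq_mul]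

theorem isRotationInvariant_of_separating_gaussianReal [SecondCountableTopology E]
    [CompleteSpace E] [IsFiniteMeasure μ] {V : Submodule ℝ (StrongDual ℝ E)}
    (hV : ∀ x, (∀ L ∈ V, L x = 0) → x = 0)
    (hμ : ∀ L ∈ V, ∃ v : ℝ≥0, μ.map L = gaussianReal 0 v) : IsRotationInvariant μ := by
  intro θ
  let W : Submodule ℝ (StrongDual ℝ (E × E)) :=
    V.comap (ContinuousLinearMap.precomp ℝ (.inl ℝ E E)).toLinearMap ⊓
      V.comap (ContinuousLinearMap.precomp ℝ (.inr ℝ E E)).toLinearMap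
  have hW : ∀ z, (∀ L ∈ W, L z = 0) → z = 0 := by
    refine fun z hz => Prod.ext (hV _ fun L hL => ?_) (hV _ fun L hL => ?_)
    · exact hz (L.comp (.fst ℝ E E)) ⟨hL, by simp [ContinuousLinearMap.comp_assoc]⟩
    · exact hz (L.comp (.snd ℝ E E)) ⟨by simp [ContinuousLinearMap.comp_assoc], hL⟩
  refine ext_of_charFunDual_eq_on_separating hW fun L hL => ?_
  obtain ⟨hA, hB⟩ : L.comp (.inl ℝ E E) ∈ V ∧ L.comp (.inr ℝ E E) ∈ V := hL
  rw [charFunDual_map_rotation_prod, charFunDual_prod]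
  generalize L.comp (.inl ℝ E E) = A at *
  generalize L.comp (.inr ℝ E E) = B at *
  have hchar : ∀ C ∈ V, charFunDual μ C = Complex.exp (-(∫ x, C x ^ 2 ∂μ : ℝ) / 2) :=
    fun C hC => charFunDual_eq_exp_of_map_eq_gaussianReal (hμ C hC).choose_spec
  have hsq := integral_sq_rotate (memLp_two_of_map_eq_gaussianReal (hμ A hA).choose_spec)
    (memLp_two_of_map_eq_gaussianReal (hμ B hB).choose_spec) θ
  rw [hchar A hA, hchar B hB, hchar _ (V.sub_mem (V.smul_mem _ hA) (V.smul_mem _ hB)),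
    hchar _ (V.add_mem (V.smul_mem _ hA) (V.smul_mem _ hB)), ← Complex.exp_add, ← Complex.exp_add,
    ← add_div, ← add_div, ← neg_add, ← neg_add, ← Complex.ofReal_add, ← Complex.ofReal_add, ← hsq]
  rfl

end GaussianFunctionals

theorem support_gaussian_eq_closure_span_covariance_general
    {E : Type*} [NormedAddCommGroup E] [NormedSpace ℝ E] [CompleteSpace E]
    [SecondCountableTopology E] [MeasurableSpace E] [BorelSpace E]
    {ι : Type*} {ℓ : ι → StrongDual ℝ E} (hℓ : ∀ x, (∀ i, ℓ i x = 0) → x = 0)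
    {Ω : Type*} [MeasurableSpace Ω] (P : Measure Ω) [IsProbabilityMeasure P]
    {X : Ω → E} (hX : AEMeasurable X P)
    (hgauss : ∀ L ∈ Submodule.span ℝ (Set.range ℓ),
      ∃ v : ℝ≥0, P.map (fun ω => L (X ω)) = gaussianReal 0 v)
    {h : ι → E} (hh : ∀ i j, ℓ j (h i) = ∫ ω, ℓ j (X ω) * ℓ i (X ω) ∂P) :
    (P.map X).support = closure (Submodule.span ℝ (Set.range h) : Set E) := by
  have : IsProbabilityMeasure (P.map X) := Measure.isProbabilityMeasure_map hX
  have hrot : IsRotationInvariant (P.map X) := by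
    refine isRotationInvariant_of_separating_gaussianReal (V := Submodule.span ℝ (Set.range ℓ))
      (fun x hx => hℓ x fun i => hx _ (Submodule.subset_span ⟨i, rfl⟩)) fun L hL => ?_
    rw [AEMeasurable.map_map_of_aemeasurable (by fun_prop) hX]
    exact hgauss L hL
  have hcov : ∀ i, covarianceVector (P.map X) (ℓ i) = h i := fun i => by
    refine sub_eq_zero.1 (hℓ _ fun j => ?_)
    rw [map_sub, sub_eq_zero, apply_covarianceVector hrot.memLp_two_id, hh,
      integral_map hX (by fun_prop)]
  rw [hrot.support_eq_closure_span_covarianceVector hℓ]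
  simp only [hcov]

section ContinuousPaths

variable {K : Type*} [TopologicalSpace K] {k : ℕ}

/-- The functional on `C(K, ℝ^k)` that evaluates the `j`-th coordinate at the point `p`, for
`pj = (p, j)`. -/
noncomputable def evalCoord (pj : K × Fin k) : StrongDual ℝ C(K, Fin k → ℝ) :=
  (ContinuousLinearMap.proj pj.2).comp (ContinuousMap.evalCLM ℝ pj.1)

@[simp]
lemma evalCoord_apply (pj : K × Fin k) (f : C(K, Fin k → ℝ)) : evalCoord pj f = f pj.1 pj.2 :=
  rfl

lemma eq_zero_of_forall_evalCoord_eq_zero (f : C(K, Fin k → ℝ)) (hf : ∀ pj, evalCoord pj f = 0) :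
    f = 0 :=
  ContinuousMap.ext fun p => funext fun j => hf (p, j)

lemma exists_map_span_evalCoord_eq_gaussianReal [MeasurableSpace C(K, Fin k → ℝ)]
    [BorelSpace C(K, Fin k → ℝ)] {Ω : Type*} [MeasurableSpace Ω] {P : Measure Ω}
    {X : Ω → C(K, Fin k → ℝ)} (hX : Measurable X)
    (hgauss : ∀ (j : ℕ) (p : Fin j → K),
      IsCenteredGaussianLaw (P.map (fun ω => fun q : Fin j × Fin k => X ω (p q.1) q.2)))
    {L : StrongDual ℝ C(K, Fin k → ℝ)}
    (hL : L ∈ Submodule.span ℝ (Set.range (evalCoord (K := K) (k := k)))) :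
    ∃ v : ℝ≥0, P.map (fun ω => L (X ω)) = gaussianReal 0 v := by
  obtain ⟨n, c, g, rfl⟩ := Submodule.mem_span_set'.1 hL
  choose q hq using fun m => (g m).2
  obtain ⟨v, hv⟩ := hgauss n (fun m => (q m).1) fun mi => if mi.2 = (q mi.1).2 then c mi.1 else 0
  refine ⟨v, hv ▸ ?_⟩
  have hmarginal : Measurable fun ω => fun mi : Fin n × Fin k => X ω (q mi.1).1 mi.2 :=
    measurable_pi_lambda _ fun mi =>
      (evalCoord ((q mi.1).1, mi.2)).continuous.measurable.comp hX
  rw [Measure.map_map (by fun_prop) hmarginal]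
  congr with ω
  simp [Fintype.sum_prod_type, ← hq]

end ContinuousPaths

/-- Let `X` be a centered Gaussian process on a compact metric space `K` with values in `ℝ^k`,
with continuous sample paths, viewed as a random element of `C(K, ℝ^k)`, and let
`K_X(p,q) = E[X(p)X(q)ᵀ]` be its covariance function.  If `h p j ∈ C(K, ℝ^k)` denote the
functions `h p j (q) i = K_X(q,p)^{i j}`, then the support of the law of `X` is the closure in
`C(K, ℝ^k)` of the linear span of the functions `h p j`, `p ∈ K`, `j = 1, …, k`. -/
theorem support_gaussian_eq_closure_span_covariance
    {K : Type} [MetricSpace K] [CompactSpace K] {k : ℕ}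
    [MeasurableSpace C(K, Fin k → ℝ)] [BorelSpace C(K, Fin k → ℝ)]
    {Ω : Type} [MeasurableSpace Ω] (P : Measure Ω) [IsProbabilityMeasure P]
    (X : Ω → C(K, Fin k → ℝ)) (hX : Measurable X)
    (hgauss : ∀ (j : ℕ) (p : Fin j → K),
      IsCenteredGaussianLaw (P.map (fun ω => fun q : Fin j × Fin k => X ω (p q.1) q.2)))
    (h : K → Fin k → C(K, Fin k → ℝ))
    (hh : ∀ (p : K) (j : Fin k) (q : K) (i : Fin k),
      h p j q i = ∫ ω, X ω q i * X ω p j ∂P) :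
    measureSupport (P.map X) =
      closure (↑(Submodule.span ℝ
        (Set.range (fun pj : K × Fin k => h pj.1 pj.2))) : Set C(K, Fin k → ℝ)) := by
  rw [measureSupport_eq_support]
  exact support_gaussian_eq_closure_span_covariance_general (E := C(K, Fin k → ℝ))
    (ℓ := evalCoord) eq_zero_of_forall_evalCoord_eq_zero P hX.aemeasurable
    (fun _ => exists_map_span_evalCoord_eq_gaussianReal hX hgauss) (h := fun pj => h pj.1 pj.2)
    fun pj qi => hh pj.1 pj.2 qi.1 qi.2
end

section
/- Let D ⊂ ℝ^m be a closed Euclidean ball, r ≥ 1 and k ≥ 1. There exists a constant C = C(D,r,k) > 0 such that for every centered Gaussian process X with values in ℝ^k, defined on an open neighborhood of D, with almost surely C^r sample paths and whose covariance function K_X has continuous partial derivatives of order ≤ r in each of the two variables, one has E[ max_{|α| ≤ r−1, 1 ≤ i ≤ k} sup_{x∈D} |∂^α X^i(x)| ] ≤ C · sqrt( max_{|α| ≤ r, |β| ≤ r} sup_{x,y∈D} |∂_x^α ∂_y^β K_X(x,y)| ) (the maximum on the right also running over the k×k entries of K_X). -/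
open MeasureTheory ProbabilityTheory Filter Topology

/-- Iterated directional (line) derivative of a function along a list of directions. -/
noncomputable def iterLineDeriv {E : Type} [NormedAddCommGroup E] [NormedSpace ℝ E] :
    List E → (E → ℝ) → (E → ℝ)
  | [], f => f
  | v :: vs, f => iterLineDeriv vs (fun x => lineDeriv ℝ f x v)

/-- The list of coordinate directions encoding the multi-index `α`: the `i`-th basis vector of
`ℝ^m` repeated `α i` times; `iterLineDeriv (multiIndexList α) f = ∂^α f`. -/
noncomputable def multiIndexList {m : ℕ} (α : Fin m → ℕ) :
    List (EuclideanSpace ℝ (Fin m)) :=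
  (List.finRange m).flatMap fun i => List.replicate (α i) (EuclideanSpace.single i (1 : ℝ))

/-- `f` has, at every point of `U`, all the successive partial derivatives along the given list
of directions. -/
def HasLinePartialsOn {E : Type} [NormedAddCommGroup E] [NormedSpace ℝ E] (U : Set E) :
    List E → (E → ℝ) → Prop
  | [], _ => True
  | v :: vs, f => (∀ x ∈ U, LineDifferentiableAt ℝ f x v) ∧
      HasLinePartialsOn U vs (fun x => lineDeriv ℝ f x v)

/-- The mixed partial derivative `∂_x^α ∂_y^β K(x,y)` of a kernel `K : ℝ^m × ℝ^m → ℝ`. -/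
noncomputable def mixedLineDeriv {m : ℕ} (α β : Fin m → ℕ)
    (Kf : EuclideanSpace ℝ (Fin m) → EuclideanSpace ℝ (Fin m) → ℝ)
    (x y : EuclideanSpace ℝ (Fin m)) : ℝ :=
  iterLineDeriv (multiIndexList α)
    (fun x' => iterLineDeriv (multiIndexList β) (Kf x') y) x

/-!
An almost sure limit of centered Gaussian variables is also their limit in `L²`, so the `L²` closure
of the span of the variables `X^i(x)` contains all the derivatives `∂^α X^i(x)`, and these are
derivatives of `X^i` in mean square as well. The variance of `∂^α X^i(x)` is therefore
`∂_x^α ∂_y^α K_X^{ii}(x, x) ≤ N`, and for `|α| < r` the mean value inequality makes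
`x ↦ ∂^α X^i(x) ∈ L²` Lipschitz on `D` with constant `m √N`. All `L^p` norms of a centered Gaussian
variable are multiples of its standard deviation. Taking `p` larger than the entropy exponent of
`D`, the crude bound `‖max_{i ≤ n} |g_i|‖_p ≤ n^(1/p) max_i ‖g_i‖_p` is enough to make chaining
along nets of mesh `4⁻ⁿ` converge geometrically.
-/

/-! ### Iterated line derivatives -/

section IterLineDeriv

variable {E : Type} [NormedAddCommGroup E] [NormedSpace ℝ E] {U : Set E} {f : E → ℝ} {n : ℕ}

lemma iterLineDeriv_eqOn (hU : IsOpen U) (L : List E) {g : E → ℝ} (h : Set.EqOn f g U) :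
    Set.EqOn (iterLineDeriv L f) (iterLineDeriv L g) U := by
  induction L generalizing f g with
  | nil => exact h
  | cons _ _ ih => exact ih fun x hx => (h.eventuallyEq_of_mem (hU.mem_nhds hx)).lineDeriv_eq

lemma iterLineDeriv_append (L L' : List E) (f : E → ℝ) :
    iterLineDeriv (L ++ L') f = iterLineDeriv L' (iterLineDeriv L f) := by
  induction L generalizing f with
  | nil => rfl
  | cons _ _ ih => exact ih _

lemma lineDeriv_eqOn_fderiv (hU : IsOpen U) (hf : ContDiffOn ℝ 1 f U) (v : E) :
    Set.EqOn (lineDeriv ℝ f · v) (fderiv ℝ f · v) U := fun _ hx =>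
  ((hf.contDiffAt (hU.mem_nhds hx)).differentiableAt one_ne_zero).lineDeriv_eq_fderiv

lemma contDiffOn_lineDeriv (hU : IsOpen U) (hf : ContDiffOn ℝ (n + 1 : ℕ) f U) (v : E) :
    ContDiffOn ℝ n (lineDeriv ℝ f · v) U := by
  have hfderiv : ContDiffOn ℝ n (fderiv ℝ f) U := hf.fderiv_of_isOpen hU (by norm_cast)
  exact (hfderiv.clm_apply contDiffOn_const).congr
    (lineDeriv_eqOn_fderiv hU (hf.of_le (by norm_cast; lia)) v)

lemma contDiffOn_iterLineDeriv (hU : IsOpen U) (L : List E)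
    (hf : ContDiffOn ℝ (n + L.length : ℕ) f U) : ContDiffOn ℝ n (iterLineDeriv L f) U := by
  induction L generalizing f with
  | nil => exact hf
  | cons v _ ih => exact ih (contDiffOn_lineDeriv hU hf v)

lemma lineDeriv_lineDeriv_comm (hU : IsOpen U) (hf : ContDiffOn ℝ 2 f U) {x : E} (hx : x ∈ U)
    (v w : E) :
    lineDeriv ℝ (lineDeriv ℝ f · v) x w = lineDeriv ℝ (lineDeriv ℝ f · w) x v := by
  have hfderiv : DifferentiableAt ℝ (fderiv ℝ f) x :=
    ((hf.fderiv_of_isOpen (m := 1) hU one_add_one_eq_two.le).contDiffAt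
      (hU.mem_nhds hx)).differentiableAt one_ne_zero
  have eq_second_fderiv (a b : E) :
      lineDeriv ℝ (lineDeriv ℝ f · a) x b = fderiv ℝ (fderiv ℝ f) x b a := by
    rw [((lineDeriv_eqOn_fderiv hU (hf.of_le one_le_two) a).eventuallyEq_of_mem
        (hU.mem_nhds hx)).lineDeriv_eq,
      (hfderiv.clm_apply (differentiableAt_const a)).lineDeriv_eq_fderiv,
      fderiv_clm_apply hfderiv (differentiableAt_const a)]
    simp
  rw [eq_second_fderiv, eq_second_fderiv]
  exact (hf.contDiffAt (hU.mem_nhds hx)).isSymmSndFDerivAt (by simp) w v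

lemma iterLineDeriv_eqOn_of_perm (hU : IsOpen U) {L L' : List E} (h : L.Perm L')
    (hf : ContDiffOn ℝ L.length f U) :
    Set.EqOn (iterLineDeriv L f) (iterLineDeriv L' f) U := by
  induction h generalizing f with
  | nil => exact Set.eqOn_refl _ _
  | cons v _ ih => exact ih (contDiffOn_lineDeriv hU hf v)
  | swap v w L =>
    exact iterLineDeriv_eqOn hU L fun x hx =>
      lineDeriv_lineDeriv_comm hU (hf.of_le (by simp only [List.length_cons]; norm_cast; lia))
        hx w v
  | trans h _ ih ih' => exact (ih hf).trans (ih' (h.length_eq ▸ hf))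

end IterLineDeriv

section MultiIndexList

variable {m : ℕ}

lemma length_multiIndexList (α : Fin m → ℕ) : (multiIndexList α).length = ∑ l, α l := by
  simp only [multiIndexList, List.length_flatMap, List.length_replicate]
  exact (Fin.sum_univ_def α).symm

lemma coe_multiIndexList (α : Fin m → ℕ) :
    (multiIndexList α : Multiset (EuclideanSpace ℝ (Fin m))) =
      ∑ l, α l • {EuclideanSpace.single l (1 : ℝ)} := by
  rw [multiIndexList, ← Multiset.coe_bind, Multiset.bind, Multiset.join, Fin.sum_univ_def]
  simp only [Multiset.map_coe, Multiset.sum_coe, Multiset.nsmul_singleton, Multiset.coe_replicate]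

lemma multiIndexList_append_single_perm (α : Fin m → ℕ) (l : Fin m) :
    (multiIndexList α ++ [EuclideanSpace.single l (1 : ℝ)]).Perm
      (multiIndexList (α + Pi.single l 1)) := by
  rw [← Multiset.coe_eq_coe, ← Multiset.coe_add, coe_multiIndexList, coe_multiIndexList]
  simp [add_smul, Finset.sum_add_distrib, Pi.single_apply]

lemma lineDeriv_iterLineDeriv_multiIndexList {U : Set (EuclideanSpace ℝ (Fin m))}
    (hU : IsOpen U) {f : EuclideanSpace ℝ (Fin m) → ℝ} {α : Fin m → ℕ}
    (hf : ContDiffOn ℝ ((∑ l, α l) + 1 : ℕ) f U) {x : EuclideanSpace ℝ (Fin m)} (hx : x ∈ U)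
    (v : EuclideanSpace ℝ (Fin m)) :
    lineDeriv ℝ (iterLineDeriv (multiIndexList α) f) x v =
      ∑ l, v l * iterLineDeriv (multiIndexList (α + Pi.single l 1)) f x := by
  have hlength := length_multiIndexList α
  have hg : ContDiffOn ℝ 1 (iterLineDeriv (multiIndexList α) f) U :=
    contDiffOn_iterLineDeriv (n := 1) hU _ (by rwa [hlength, add_comm])
  have along_basis (l : Fin m) :
      fderiv ℝ (iterLineDeriv (multiIndexList α) f) x (EuclideanSpace.single l 1) =
        iterLineDeriv (multiIndexList (α + Pi.single l 1)) f x := by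
    rw [← iterLineDeriv_eqOn_of_perm hU (multiIndexList_append_single_perm α l)
      (by simpa [hlength] using hf) hx, iterLineDeriv_append]
    exact (lineDeriv_eqOn_fderiv hU hg _ hx).symm
  have sum_basis : ∑ l, v l • EuclideanSpace.single l (1 : ℝ) = v := by
    simpa using (EuclideanSpace.basisFun (Fin m) ℝ).sum_repr v
  calc lineDeriv ℝ (iterLineDeriv (multiIndexList α) f) x v
      = fderiv ℝ (iterLineDeriv (multiIndexList α) f) x
          (∑ l, v l • EuclideanSpace.single l (1 : ℝ)) := by
        rw [sum_basis]
        exact lineDeriv_eqOn_fderiv hU hg v hx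
    _ = ∑ l, v l * iterLineDeriv (multiIndexList (α + Pi.single l 1)) f x := by
        simp [along_basis]

end MultiIndexList

/-! ### Gaussian Hilbert spaces -/

section GaussianHilbertSpace

variable {Ω : Type*} [MeasurableSpace Ω] {P : Measure Ω} {ι T : Type*} {l : Filter ι}

lemma tendsto_charFun_map_of_tendstoInDistribution {E : Type*} [NormedAddCommGroup E]
    [InnerProductSpace ℝ E] [MeasurableSpace E] [BorelSpace E] [IsProbabilityMeasure P]
    {F : ι → Ω → E} {f : Ω → E} (h : TendstoInDistribution F l f (fun _ => P) P) (t : E) :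
    Tendsto (fun i => charFun (P.map (F i)) t) l (𝓝 (charFun (P.map f) t)) := by
  simp_rw [charFun_eq_integral_innerProbChar]
  exact (ProbabilityMeasure.tendsto_iff_forall_integral_rclike_tendsto ℂ).1 h.tendsto
    (BoundedContinuousFunction.innerProbChar t)

lemma aemeasurable_coeFn (F : Lp ℝ 2 P) : AEMeasurable F P :=
  (Lp.aestronglyMeasurable F).aemeasurable

lemma coeFn_sum_smul (s : Finset ι) (c : ι → ℝ) (F : ι → Lp ℝ 2 P) :
    ⇑(∑ i ∈ s, c i • F i) =ᵐ[P] fun ω => ∑ i ∈ s, c i * F i ω := by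
  classical
  induction s using Finset.induction_on with
  | empty => exact Lp.coeFn_zero ℝ 2 P
  | insert i s hi ih =>
    rw [Finset.sum_insert hi]
    filter_upwards [Lp.coeFn_add (c i • F i) (∑ i ∈ s, c i • F i), Lp.coeFn_smul (c i) (F i), ih]
      with ω hadd hsmul hsum
    rw [hadd, Pi.add_apply, hsmul, hsum, Finset.sum_insert hi, Pi.smul_apply, smul_eq_mul]

lemma nnnorm_sq_eq_of_map_eq_gaussianReal {F : Lp ℝ 2 P} {v : NNReal}
    (h : P.map F = gaussianReal 0 v) : ‖F‖₊ ^ 2 = v := by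
  have norm_sq_eq : ‖F‖ ^ 2 = v := by
    rw [← real_inner_self_eq_norm_sq, L2.inner_def, ← variance_id_gaussianReal (μ := 0) (v := v),
      variance_eq_integral measurable_id.aemeasurable, ← h,
      integral_map (aemeasurable_coeFn F) (by fun_prop)]
    simp [h, sq]
  exact NNReal.eq (by simpa using norm_sq_eq)

/-- A Gaussian Hilbert space in the sense of Janson: a closed subspace of `L²(P)` all of whose
elements are centered Gaussian variables. The variance of `F` is then the square of its norm. -/
structure IsGaussianHilbertSpace (H : Submodule ℝ (Lp ℝ 2 P)) : Prop where
  isClosed : IsClosed (H : Set (Lp ℝ 2 P))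
  map_eq : ∀ F ∈ H, P.map F = gaussianReal 0 (‖F‖₊ ^ 2)

lemma charFun_gaussianReal_nnnorm_sq (F : Lp ℝ 2 P) (t : ℝ) :
    charFun (gaussianReal 0 (‖F‖₊ ^ 2)) t = (Real.exp (-(‖F‖ ^ 2 * t ^ 2 / 2)) : ℝ) := by
  simp [charFun_gaussianReal]

lemma isGaussianHilbertSpace_topologicalClosure [IsProbabilityMeasure P]
    {H : Submodule ℝ (Lp ℝ 2 P)}
    (hH : ∀ F ∈ H, ∃ v : NNReal, P.map F = gaussianReal 0 v) :
    IsGaussianHilbertSpace H.topologicalClosure where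
  isClosed := H.isClosed_topologicalClosure
  map_eq := by
    intro F hF
    obtain ⟨u, hu, hlim⟩ := mem_closure_iff_seq_limit.1 hF
    have hdist := (tendstoInMeasure_of_tendsto_Lp hlim).tendstoInDistribution
      fun n => aemeasurable_coeFn (u n)
    have charFun_eq (n : ℕ) (t : ℝ) :
        charFun (P.map (u n)) t = (Real.exp (-(‖u n‖ ^ 2 * t ^ 2 / 2)) : ℝ) := by
      obtain ⟨v, hv⟩ := hH _ (hu n)
      rw [hv, ← nnnorm_sq_eq_of_map_eq_gaussianReal hv, charFun_gaussianReal_nnnorm_sq]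
    have := Measure.isProbabilityMeasure_map (aemeasurable_coeFn F)
    refine Measure.ext_of_charFun (funext fun t => ?_)
    refine tendsto_nhds_unique (tendsto_charFun_map_of_tendstoInDistribution hdist t) ?_
    simp_rw [charFun_eq, charFun_gaussianReal_nnnorm_sq]
    exact (Complex.continuous_ofReal.tendsto _).comp <| (Real.continuous_exp.tendsto _).comp
      ((((hlim.norm.pow 2).mul_const _).div_const _).neg)

lemma ae_tendsto_comp_of_ae_eq {F f : ι → Ω → ℝ} {g : Ω → ℝ} (hFf : ∀ᶠ i in l, F i =ᵐ[P] f i)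
    (hf : ∀ᵐ ω ∂P, Tendsto (f · ω) l (𝓝 (g ω))) {u : ℕ → ι} (hu : Tendsto u atTop l) :
    ∀ᵐ ω ∂P, Tendsto (fun n => F (u n) ω) atTop (𝓝 (g ω)) := by
  obtain ⟨n₀, hn₀⟩ := eventually_atTop.1 (hu.eventually hFf)
  filter_upwards [hf, ae_all_iff.2 fun n => ae_all_iff.2 (hn₀ n)] with ω hω heq
  exact (hω.comp hu).congr' (eventually_atTop.2 ⟨n₀, fun n hn => (heq n hn).symm⟩)

namespace IsGaussianHilbertSpace

variable {H : Submodule ℝ (Lp ℝ 2 P)} {F : ι → Lp ℝ 2 P} {f : ι → Ω → ℝ} {g : Ω → ℝ}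

lemma eLpNorm_eq (hH : IsGaussianHilbertSpace H) {G : Lp ℝ 2 P} (hG : G ∈ H) (p : ENNReal) :
    eLpNorm G p P = ‖G‖ₑ * eLpNorm id p (gaussianReal 0 1) := by
  have scaled : gaussianReal 0 (‖G‖₊ ^ 2) = (gaussianReal 0 1).map (‖G‖ * ·) := by
    rw [gaussianReal_map_const_mul, mul_zero, mul_one]
    rfl
  calc eLpNorm G p P = eLpNorm id p (P.map G) := by
        rw [eLpNorm_map_measure aestronglyMeasurable_id (aemeasurable_coeFn G), Function.id_comp]
    _ = eLpNorm (‖G‖ • id) p (gaussianReal 0 1) := by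
        rw [hH.map_eq G hG, scaled, eLpNorm_map_measure aestronglyMeasurable_id (by fun_prop)]
        rfl
    _ = ‖G‖ₑ * eLpNorm id p (gaussianReal 0 1) := by rw [eLpNorm_const_smul, enorm_norm]

variable [IsProbabilityMeasure P] [l.IsCountablyGenerated]

/- The characteristic function at `1` of a centered Gaussian is `exp (-‖F‖² / 2)`, so convergence
to `0` in distribution already forces convergence to `0` in `L²`. -/
lemma tendsto_zero (hH : IsGaussianHilbertSpace H) (hF : ∀ᶠ i in l, F i ∈ H)
    (hFf : ∀ᶠ i in l, F i =ᵐ[P] f i) (hf : ∀ᵐ ω ∂P, Tendsto (f · ω) l (𝓝 0)) :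
    Tendsto F l (𝓝 0) := by
  refine tendsto_of_seq_tendsto fun u hu => tendsto_zero_iff_norm_tendsto_zero.2 ?_
  have hdist := tendstoInDistribution_of_ae_tendsto (fun n => aemeasurable_coeFn (F (u n)))
    aemeasurable_const (ae_tendsto_comp_of_ae_eq hFf hf hu)
  have hexp : Tendsto (fun n => Real.exp (-(‖F (u n)‖ ^ 2 / 2))) atTop (𝓝 1) := by
    have hre := (Complex.continuous_re.tendsto _).comp
      (tendsto_charFun_map_of_tendstoInDistribution hdist 1)
    simp only [Measure.map_const, measure_univ, one_smul, charFun_dirac, inner_zero_left,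
      Complex.ofReal_zero, zero_mul, Complex.exp_zero, Complex.one_re] at hre
    refine hre.congr' ?_
    filter_upwards [hu.eventually hF] with n hn
    simp [hH.map_eq _ hn, charFun_gaussianReal_nnnorm_sq, -Complex.ofReal_exp]
  have hsq : Tendsto (fun n => ‖F (u n)‖ ^ 2) atTop (𝓝 0) := by
    simpa [mul_div_cancel₀] using (hexp.log one_ne_zero).const_mul (-2)
  simpa using hsq.sqrt

lemma exists_tendsto_of_ae_tendsto (hH : IsGaussianHilbertSpace H) [l.NeBot]
    (hF : ∀ᶠ i in l, F i ∈ H) (hFf : ∀ᶠ i in l, F i =ᵐ[P] f i)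
    (hf : ∀ᵐ ω ∂P, Tendsto (f · ω) l (𝓝 (g ω))) :
    ∃ G ∈ H, G =ᵐ[P] g ∧ Tendsto F l (𝓝 G) := by
  have hCauchy : Cauchy (map F l) := by
    rw [cauchy_map_iff', uniformity_eq_comap_nhds_zero, tendsto_comap_iff]
    refine hH.tendsto_zero (f := fun i ω => f i.2 ω - f i.1 ω) ?_ ?_ ?_
    · filter_upwards [hF.prod_mk hF] with i hi using H.sub_mem hi.2 hi.1
    · filter_upwards [hFf.prod_mk hFf] with i hi
      exact (Lp.coeFn_sub _ _).trans (hi.2.sub hi.1)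
    · filter_upwards [hf] with ω hω
      simpa using (hω.comp tendsto_snd).sub (hω.comp tendsto_fst)
  obtain ⟨G, hG⟩ := CompleteSpace.complete hCauchy
  refine ⟨G, hH.isClosed.mem_of_tendsto hG hF, ?_, hG⟩
  obtain ⟨u, hu, hae⟩ := (tendstoInMeasure_of_tendsto_Lp hG).exists_seq_tendsto_ae'
  filter_upwards [hae, ae_tendsto_comp_of_ae_eq hFf hf hu] with ω hω hω'
  exact tendsto_nhds_unique hω hω'

end IsGaussianHilbertSpace

lemma memLp_of_map_eq_gaussianReal {ξ : Ω → ℝ} {μ : ℝ} {v : NNReal}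
    (h : P.map ξ = gaussianReal μ v) (p : NNReal) : MemLp ξ p P :=
  (h ▸ memLp_id_gaussianReal p : MemLp id p (P.map ξ)).comp_of_map <|
    AEMeasurable.of_map_ne_zero (h ▸ IsProbabilityMeasure.ne_zero _)

lemma exists_isGaussianHilbertSpace [IsProbabilityMeasure P] {s : Set T} {ξ : T → Ω → ℝ}
    (hξ : ∀ (n : ℕ) (t : Fin n → T), (∀ i, t i ∈ s) → ∀ c : Fin n → ℝ,
      ∃ v : NNReal, P.map (fun ω => ∑ i, c i * ξ (t i) ω) = gaussianReal 0 v) :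
    ∃ (H : Submodule ℝ (Lp ℝ 2 P)) (Y : T → Lp ℝ 2 P), IsGaussianHilbertSpace H ∧
      ∀ t ∈ s, Y t ∈ H ∧ Y t =ᵐ[P] ξ t := by
  classical
  have memLp_two (t : T) (ht : t ∈ s) : MemLp (ξ t) 2 P := by
    obtain ⟨v, hv⟩ := hξ 1 (fun _ => t) (fun _ => ht) fun _ => 1
    exact memLp_of_map_eq_gaussianReal (by simpa using hv) 2
  let Y (t : T) : Lp ℝ 2 P := if h : MemLp (ξ t) 2 P then h.toLp (ξ t) else 0
  have coeFn_Y (t : T) (ht : t ∈ s) : Y t =ᵐ[P] ξ t := by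
    simp only [Y, dif_pos (memLp_two t ht)]
    exact MemLp.coeFn_toLp _
  refine ⟨(Submodule.span ℝ (Y '' s)).topologicalClosure, Y,
    isGaussianHilbertSpace_topologicalClosure fun F hF => ?_, fun t ht =>
      ⟨subset_closure (Submodule.subset_span (Set.mem_image_of_mem Y ht)), coeFn_Y t ht⟩⟩
  obtain ⟨n, c, y, rfl⟩ := Submodule.mem_span_set'.1 hF
  choose t ht hty using fun i => (y i).2
  obtain ⟨v, hv⟩ := hξ n t ht c
  refine ⟨v, hv ▸ Measure.map_congr ?_⟩
  filter_upwards [coeFn_sum_smul Finset.univ c fun i => (y i : Lp ℝ 2 P),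
    ae_all_iff.2 fun i => coeFn_Y (t i) (ht i)] with ω hsum hY
  rw [hsum]
  simp only [← hty, hY]

end GaussianHilbertSpace

/-! ### Mean-square differentiation -/

lemma norm_sub_le_of_hasLineDerivAt {E F : Type*} [NormedAddCommGroup E] [NormedSpace ℝ E]
    [NormedAddCommGroup F] [NormedSpace ℝ F] {D : Set E} (hD : Convex ℝ D) {Y Y' : E → F}
    {C : ℝ} {a b : E} (ha : a ∈ D) (hb : b ∈ D)
    (hY : ∀ x ∈ D, HasLineDerivAt ℝ Y (Y' x) x (b - a)) (hC : ∀ x ∈ D, ‖Y' x‖ ≤ C) :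
    ‖Y b - Y a‖ ≤ C := by
  have mem_D (t : ℝ) (ht : t ∈ Set.Icc 0 1) : a + t • (b - a) ∈ D :=
    hD.add_smul_sub_mem ha hb ht
  have hderiv (t : ℝ) (ht : t ∈ Set.Icc 0 1) :
      HasDerivWithinAt (fun s : ℝ => Y (a + s • (b - a))) (Y' (a + t • (b - a)))
        (Set.Icc 0 1) t := by
    have hline : HasDerivAt (fun s : ℝ => Y (a + t • (b - a) + s • (b - a)))
        (Y' (a + t • (b - a))) (t - t) := by
      rw [sub_self]
      exact hY _ (mem_D t ht)
    convert! (hline.comp_sub_const t t).hasDerivWithinAt using 3 with s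
    module
  simpa using norm_image_sub_le_of_norm_deriv_le_segment_01' hderiv
    fun t ht => hC _ (mem_D t (Set.Ico_subset_Icc_self ht))

section RepresentsOn

open scoped InnerProductSpace

variable {Ω : Type*} [MeasurableSpace Ω] {P : Measure Ω} {H : Submodule ℝ (Lp ℝ 2 P)}

/-- The `L²`-valued map `Y` represents the random function `f` on `U`: each `Y x`, `x ∈ U`, lies in
`H` and is the class of the random variable `ω ↦ f ω x`. -/
def RepresentsOn {E : Type*} (H : Submodule ℝ (Lp ℝ 2 P)) (U : Set E) (Y : E → Lp ℝ 2 P)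
    (f : Ω → E → ℝ) : Prop :=
  ∀ x ∈ U, Y x ∈ H ∧ Y x =ᵐ[P] fun ω => f ω x

namespace RepresentsOn

lemma inner_eq_integral {E : Type*} {U : Set E} {Y : E → Lp ℝ 2 P} {f : Ω → E → ℝ}
    (hY : RepresentsOn H U Y f) {x y : E} (hx : x ∈ U) (hy : y ∈ U) :
    ⟪Y x, Y y⟫_ℝ = ∫ ω, f ω x * f ω y ∂P := by
  rw [L2.inner_def]
  refine integral_congr_ae ?_
  filter_upwards [(hY x hx).2, (hY y hy).2] with ω hωx hωy
  simp [hωx, hωy, mul_comm]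

lemma aestronglyMeasurable {E : Type*} {U : Set E} {Y : E → Lp ℝ 2 P} {f : Ω → E → ℝ}
    (hY : RepresentsOn H U Y f) {x : E} (hx : x ∈ U) : AEStronglyMeasurable (f · x) P :=
  (Lp.aestronglyMeasurable (Y x)).congr (hY x hx).2

variable [IsProbabilityMeasure P]

lemma exists_hasLineDerivAt {E : Type*} [NormedAddCommGroup E] [NormedSpace ℝ E] {U : Set E}
    {Y : E → Lp ℝ 2 P} {f : Ω → E → ℝ} (hY : RepresentsOn H U Y f)
    (hH : IsGaussianHilbertSpace H) (hU : IsOpen U) (v : E)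
    (hf : ∀ᵐ ω ∂P, ∀ x ∈ U, LineDifferentiableAt ℝ (f ω) x v) :
    ∃ Y' : E → Lp ℝ 2 P, RepresentsOn H U Y' (fun ω x => lineDeriv ℝ (f ω) x v) ∧
      ∀ x ∈ U, HasLineDerivAt ℝ Y (Y' x) x v := by
  have at_point (x : E) (hx : x ∈ U) :
      ∃ G ∈ H, G =ᵐ[P] (fun ω => lineDeriv ℝ (f ω) x v) ∧ HasLineDerivAt ℝ Y G x v := by
    have mem_U : ∀ᶠ t : ℝ in 𝓝[≠] 0, x + t • v ∈ U := by
      refine nhdsWithin_le_nhds (ContinuousAt.eventually_mem (by fun_prop) ?_)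
      simpa using hU.mem_nhds hx
    have slope_mem : ∀ᶠ t : ℝ in 𝓝[≠] 0, t⁻¹ • (Y (x + t • v) - Y x) ∈ H := by
      filter_upwards [mem_U] with t ht using H.smul_mem _ (H.sub_mem (hY _ ht).1 (hY x hx).1)
    have slope_ae_eq : ∀ᶠ t : ℝ in 𝓝[≠] 0, t⁻¹ • (Y (x + t • v) - Y x)
        =ᵐ[P] fun ω => t⁻¹ • (f ω (x + t • v) - f ω x) := by
      filter_upwards [mem_U] with t ht
      filter_upwards [Lp.coeFn_smul t⁻¹ (Y (x + t • v) - Y x), Lp.coeFn_sub (Y (x + t • v)) (Y x),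
        (hY _ ht).2, (hY x hx).2] with ω hsmul hsub hωt hωx
      rw [hsmul, Pi.smul_apply, hsub, Pi.sub_apply, hωt, hωx]
    simp_rw [hasLineDerivAt_iff_tendsto_slope_zero]
    refine hH.exists_tendsto_of_ae_tendsto slope_mem slope_ae_eq ?_
    filter_upwards [hf] with ω hω
    exact hasLineDerivAt_iff_tendsto_slope_zero.1 (hω x hx).hasLineDerivAt
  choose! Y' mem_H ae_eq hderiv using at_point
  exact ⟨Y', fun x hx => ⟨mem_H x hx, ae_eq x hx⟩, hderiv⟩

lemma exists_iterLineDeriv {E : Type} [NormedAddCommGroup E] [NormedSpace ℝ E] {U : Set E}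
    {Y : E → Lp ℝ 2 P} {f : Ω → E → ℝ} (hY : RepresentsOn H U Y f)
    (hH : IsGaussianHilbertSpace H) (hU : IsOpen U) (L : List E)
    (hf : ∀ᵐ ω ∂P, ContDiffOn ℝ L.length (f ω) U) :
    ∃ Y' : E → Lp ℝ 2 P, RepresentsOn H U Y' (fun ω => iterLineDeriv L (f ω)) ∧
      ∀ G : Lp ℝ 2 P, ∀ x ∈ U, iterLineDeriv L (fun y => ⟪G, Y y⟫_ℝ) x = ⟪G, Y' x⟫_ℝ := by
  induction L generalizing f Y with
  | nil => exact ⟨Y, hY, fun _ _ _ => rfl⟩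
  | cons v L ih =>
    obtain ⟨Y₁, hY₁, hderiv⟩ := hY.exists_hasLineDerivAt hH hU v <| by
      filter_upwards [hf] with ω hω x hx
      exact ((hω.contDiffAt (hU.mem_nhds hx)).differentiableAt
        (by simp)).lineDifferentiableAt
    obtain ⟨Y', hY', hinner⟩ := ih hY₁ <| by
      filter_upwards [hf] with ω hω
      exact contDiffOn_lineDeriv hU hω v
    refine ⟨Y', hY', fun G x hx => ?_⟩
    rw [← hinner G x hx]
    refine iterLineDeriv_eqOn hU L (fun y hy => ?_) hx
    exact ((innerSL ℝ G).hasFDerivAt.comp_hasDerivAt 0 (hderiv y hy)).deriv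

variable {m : ℕ} {U D : Set (EuclideanSpace ℝ (Fin m))}
  {Y : EuclideanSpace ℝ (Fin m) → Lp ℝ 2 P} {f : Ω → EuclideanSpace ℝ (Fin m) → ℝ}
  {α : Fin m → ℕ}

lemma exists_norm_sq_eq_mixedLineDeriv (hY : RepresentsOn H U Y f)
    (hH : IsGaussianHilbertSpace H) (hU : IsOpen U)
    (hf : ∀ᵐ ω ∂P, ContDiffOn ℝ (∑ l, α l : ℕ) (f ω) U) :
    ∃ Y' : EuclideanSpace ℝ (Fin m) → Lp ℝ 2 P,
      RepresentsOn H U Y' (fun ω => iterLineDeriv (multiIndexList α) (f ω)) ∧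
      ∀ x ∈ U, ‖Y' x‖ ^ 2 = mixedLineDeriv α α (fun a b => ∫ ω, f ω a * f ω b ∂P) x x := by
  obtain ⟨Y', hY', hinner⟩ := hY.exists_iterLineDeriv hH hU (multiIndexList α)
    (by simpa [length_multiIndexList] using hf)
  refine ⟨Y', hY', fun x hx => ?_⟩
  have inner_second (a : EuclideanSpace ℝ (Fin m)) (ha : a ∈ U) :
      iterLineDeriv (multiIndexList α) (fun b => ∫ ω, f ω a * f ω b ∂P) x = ⟪Y' x, Y a⟫_ℝ := by
    rw [real_inner_comm, ← hinner (Y a) x hx]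
    exact iterLineDeriv_eqOn hU _ (fun b hb => (hY.inner_eq_integral ha hb).symm) hx
  rw [← real_inner_self_eq_norm_sq, ← hinner (Y' x) x hx]
  exact iterLineDeriv_eqOn hU _ (fun a ha => (inner_second a ha).symm) hx

lemma norm_sub_le {Y' : Fin m → EuclideanSpace ℝ (Fin m) → Lp ℝ 2 P} {σ : ℝ}
    (hY : RepresentsOn H U Y (fun ω => iterLineDeriv (multiIndexList α) (f ω)))
    (hY' : ∀ l, RepresentsOn H U (Y' l)
      (fun ω => iterLineDeriv (multiIndexList (α + Pi.single l 1)) (f ω)))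
    (hH : IsGaussianHilbertSpace H) (hU : IsOpen U) (hD : Convex ℝ D) (hDU : D ⊆ U)
    (hf : ∀ᵐ ω ∂P, ContDiffOn ℝ ((∑ l, α l) + 1 : ℕ) (f ω) U)
    (hσ : ∀ l, ∀ x ∈ D, ‖Y' l x‖ ≤ σ) {a b : EuclideanSpace ℝ (Fin m)} (ha : a ∈ D) (hb : b ∈ D) :
    ‖Y b - Y a‖ ≤ m * σ * ‖b - a‖ := by
  obtain ⟨Z, hZ, hderiv⟩ := hY.exists_hasLineDerivAt hH hU (b - a) <| by
    filter_upwards [hf] with ω hω x hx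
    exact (((contDiffOn_iterLineDeriv (n := 1) hU _
      (by rwa [length_multiIndexList, add_comm])).contDiffAt
        (hU.mem_nhds hx)).differentiableAt one_ne_zero).lineDifferentiableAt
  have Z_eq (x) (hx : x ∈ U) : Z x = ∑ l, (b - a) l • Y' l x := by
    refine Lp.ext ((hZ x hx).2.trans ?_)
    filter_upwards [hf, coeFn_sum_smul Finset.univ (b - a) (Y' · x),
      ae_all_iff.2 fun l => (hY' l x hx).2] with ω hω hsum hY'ω
    simp only [hsum, hY'ω, lineDeriv_iterLineDeriv_multiIndexList hU hω hx]
  refine norm_sub_le_of_hasLineDerivAt hD ha hb (fun x hx => hderiv x (hDU hx)) fun x hx => ?_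
  calc ‖Z x‖ ≤ ∑ l, ‖(b - a) l • Y' l x‖ := Z_eq x (hDU hx) ▸ norm_sum_le _ _
    _ ≤ ∑ _l : Fin m, ‖b - a‖ * σ := by
        gcongr with l
        rw [norm_smul]
        exact mul_le_mul (PiLp.norm_apply_le _ l) (hσ l x hx) (norm_nonneg _) (norm_nonneg _)
    _ = m * σ * ‖b - a‖ := by
        rw [Finset.sum_const, Finset.card_univ, Fintype.card_fin, nsmul_eq_mul]
        ring

end RepresentsOn

end RepresentsOn

/-! ### Chaining -/

section Chaining

open scoped ENNReal NNReal

variable {Ω : Type*} [MeasurableSpace Ω] {P : Measure Ω}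

lemma aemeasurable_biSup_enorm {ι ε : Type*} [TopologicalSpace ε] [ContinuousENorm ε]
    {s : Finset ι} {g : ι → Ω → ε} (hg : ∀ i ∈ s, AEStronglyMeasurable (g i) P) :
    AEMeasurable (fun ω => ⨆ i ∈ s, ‖g i ω‖ₑ) P :=
  AEMeasurable.biSup _ s.countable_toSet fun i hi => (hg i hi).enorm

lemma lintegral_biSup_enorm_le [IsProbabilityMeasure P] {ι ε : Type*} [TopologicalSpace ε]
    [ContinuousENorm ε] {p : ℝ≥0} (hp : 1 ≤ p) {s : Finset ι} {g : ι → Ω → ε} {K B : ℝ≥0∞}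
    (hg : ∀ i ∈ s, AEStronglyMeasurable (g i) P) (hB : ∀ i ∈ s, eLpNorm (g i) p P ≤ B)
    (hs : (s.card : ℝ≥0∞) ≤ K ^ (p : ℝ)) :
    ∫⁻ ω, ⨆ i ∈ s, ‖g i ω‖ₑ ∂P ≤ K * B := by
  set M : Ω → ℝ≥0∞ := fun ω => ⨆ i ∈ s, ‖g i ω‖ₑ
  have p_pos : (0 : ℝ) < p := by exact_mod_cast zero_lt_one.trans_le hp
  have p_ne_zero : p ≠ 0 := (zero_lt_one.trans_le hp).ne'
  have hM : AEMeasurable M P := aemeasurable_biSup_enorm hg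
  have rpow_le_sum (ω : Ω) : M ω ^ (p : ℝ) ≤ ∑ i ∈ s, ‖g i ω‖ₑ ^ (p : ℝ) := by
    rw [← ENNReal.le_rpow_inv_iff p_pos]
    refine iSup₂_le fun i hi => ?_
    rw [ENNReal.le_rpow_inv_iff p_pos]
    exact Finset.single_le_sum_of_canonicallyOrdered (f := fun i => ‖g i ω‖ₑ ^ (p : ℝ)) hi
  have eLpNorm_rpow_le : eLpNorm M p P ^ (p : ℝ) ≤ (K * B) ^ (p : ℝ) := calc
    eLpNorm M p P ^ (p : ℝ) = ∫⁻ ω, M ω ^ (p : ℝ) ∂P := by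
        simp only [eLpNorm_nnreal_pow_eq_lintegral p_ne_zero, enorm_eq_self]
    _ ≤ ∫⁻ ω, ∑ i ∈ s, ‖g i ω‖ₑ ^ (p : ℝ) ∂P := lintegral_mono rpow_le_sum
    _ = ∑ i ∈ s, eLpNorm (g i) p P ^ (p : ℝ) := by
        rw [lintegral_finsetSum' _ fun i hi => (hg i hi).enorm.pow_const _]
        simp only [eLpNorm_nnreal_pow_eq_lintegral p_ne_zero]
    _ ≤ s.card • B ^ (p : ℝ) := Finset.sum_le_card_nsmul _ _ _ fun i hi => by
        gcongr
        exact hB i hi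
    _ ≤ (K * B) ^ (p : ℝ) := by
        rw [nsmul_eq_mul, ENNReal.mul_rpow_of_nonneg _ _ p_pos.le]
        gcongr
  calc ∫⁻ ω, M ω ∂P = eLpNorm M 1 P := by simp only [eLpNorm_one_eq_lintegral_enorm, enorm_eq_self]
    _ ≤ eLpNorm M p P :=
        eLpNorm_le_eLpNorm_of_exponent_le (by exact_mod_cast hp) hM.aestronglyMeasurable
    _ ≤ K * B := (ENNReal.rpow_le_rpow_iff p_pos).1 eLpNorm_rpow_le

variable {E F : Type*} [NormedAddCommGroup F] {T : ℕ → Finset E} {π : ℕ → E → E}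

lemma enorm_le_biSup_add_sum_biSup_sub (z : E → F)
    (hπ : ∀ j, ∀ w ∈ T (j + 1), π j w ∈ T j) (n : ℕ) {w : E} (hw : w ∈ T n) :
    ‖z w‖ₑ ≤ (⨆ x ∈ T 0, ‖z x‖ₑ)
      + ∑ j ∈ Finset.range n, ⨆ x ∈ T (j + 1), ‖z x - z (π j x)‖ₑ := by
  induction n generalizing w with
  | zero => simpa using le_iSup₂ (f := fun x (_ : x ∈ T 0) => ‖z x‖ₑ) w hw
  | succ n ih =>
    calc ‖z w‖ₑ = ‖z (π n w) + (z w - z (π n w))‖ₑ := by rw [add_sub_cancel]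
      _ ≤ ‖z (π n w)‖ₑ + ‖z w - z (π n w)‖ₑ := enorm_add_le _ _
      _ ≤ _ := by
        rw [Finset.sum_range_succ, ← add_assoc]
        exact add_le_add (ih (hπ n w hw))
          (le_iSup₂ (f := fun x (_ : x ∈ T (n + 1)) => ‖z x - z (π n x)‖ₑ) w hw)

variable [PseudoEMetricSpace E] {D : Set E}

lemma biSup_enorm_le_biSup_add_tsum_biSup_sub {δ : ℕ → ℝ≥0}
    (hδ : Tendsto δ atTop (𝓝 0)) (hTD : ∀ n, (T n : Set E) ⊆ D)
    (hT : ∀ n, Metric.IsCover (δ n) D (T n : Set E))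
    (hπ : ∀ j, ∀ w ∈ T (j + 1), π j w ∈ T j) {z : E → F} (hz : ContinuousOn z D) :
    ⨆ x ∈ D, ‖z x‖ₑ ≤ (⨆ x ∈ T 0, ‖z x‖ₑ)
      + ∑' j, ⨆ x ∈ T (j + 1), ‖z x - z (π j x)‖ₑ := by
  refine iSup₂_le fun x hx => ?_
  choose u hu hxu using fun n => hT n hx
  have tendsto_u : Tendsto u atTop (𝓝[D] x) := by
    refine tendsto_nhdsWithin_iff.2 ⟨?_, .of_forall fun n => hTD n (hu n)⟩
    rw [tendsto_iff_edist_tendsto_0]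
    refine tendsto_of_tendsto_of_tendsto_of_le_of_le tendsto_const_nhds
      (ENNReal.tendsto_coe.2 hδ) (fun _ => zero_le) fun n => ?_
    rw [edist_comm]
    exact hxu n
  refine le_of_tendsto ((hz x hx).tendsto.comp tendsto_u).enorm (.of_forall fun n => ?_)
  exact (enorm_le_biSup_add_sum_biSup_sub z hπ n (hu n)).trans
    (add_le_add_right (ENNReal.sum_le_tsum _) _)

variable {f : Ω → E → F}

lemma lintegral_biSup_enorm_le_add_tsum {δ : ℕ → ℝ≥0} (hδ : Tendsto δ atTop (𝓝 0))
    (hTD : ∀ n, (T n : Set E) ⊆ D) (hT : ∀ n, Metric.IsCover (δ n) D (T n : Set E))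
    (hπ : ∀ j, ∀ w ∈ T (j + 1), π j w ∈ T j) (hf : ∀ᵐ ω ∂P, ContinuousOn (f ω) D)
    (hfm : ∀ x ∈ D, AEStronglyMeasurable (fun ω => f ω x) P) :
    ∫⁻ ω, ⨆ x ∈ D, ‖f ω x‖ₑ ∂P ≤ ∫⁻ ω, ⨆ x ∈ T 0, ‖f ω x‖ₑ ∂P
      + ∑' j, ∫⁻ ω, ⨆ x ∈ T (j + 1), ‖f ω x - f ω (π j x)‖ₑ ∂P := by
  have increment_meas (j : ℕ) (x : E) (hx : x ∈ T (j + 1)) :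
      AEStronglyMeasurable (fun ω => f ω x - f ω (π j x)) P :=
    (hfm x (hTD _ hx)).sub (hfm _ (hTD _ (hπ j x hx)))
  rw [← lintegral_tsum fun j => aemeasurable_biSup_enorm (increment_meas j),
    ← lintegral_add_left' (aemeasurable_biSup_enorm fun x hx => hfm x (hTD 0 hx))]
  refine lintegral_mono_ae ?_
  filter_upwards [hf] with ω hω
  exact biSup_enorm_le_biSup_add_tsum_biSup_sub hδ hTD hT hπ hω

lemma lintegral_biSup_enorm_le_of_isCover [IsProbabilityMeasure P] {p : ℝ≥0} (hp : 1 ≤ p)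
    {A B : ℝ≥0∞} (hTD : ∀ n, (T n : Set E) ⊆ D)
    (hT : ∀ n, Metric.IsCover ((1 / 4) ^ n) D (T n : Set E))
    (hcard : ∀ n, ((T n).card : ℝ≥0∞) ≤ (A * 2 ^ n) ^ (p : ℝ))
    (hf : ∀ᵐ ω ∂P, ContinuousOn (f ω) D) (hfm : ∀ x ∈ D, AEStronglyMeasurable (fun ω => f ω x) P)
    (hB : ∀ x ∈ D, eLpNorm (fun ω => f ω x) p P ≤ B)
    (hLip : ∀ x ∈ D, ∀ y ∈ D, eLpNorm (fun ω => f ω x - f ω y) p P ≤ B * edist x y) :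
    ∫⁻ ω, ⨆ x ∈ D, ‖f ω x‖ₑ ∂P ≤ 5 * A * B := by
  have exists_proj (j : ℕ) (w : E) (hw : w ∈ T (j + 1)) :
      ∃ y ∈ T j, edist w y ≤ ((1 / 4) ^ j : ℝ≥0) := hT j (hTD _ hw)
  choose! π hπ hπ_dist using exists_proj
  have two_mul_quarter (j : ℕ) : (2 : ℝ≥0∞) ^ j * 4⁻¹ ^ j = 2⁻¹ ^ j := by
    rw [← mul_pow, show (4 : ℝ≥0∞) = 2 * 2 by norm_num, ENNReal.mul_inv (by simp) (by simp),
      ← mul_assoc, ENNReal.mul_inv_cancel two_ne_zero ENNReal.ofNat_ne_top, one_mul]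
  have link (j : ℕ) :
      ∫⁻ ω, ⨆ w ∈ T (j + 1), ‖f ω w - f ω (π j w)‖ₑ ∂P ≤ 2 * A * B * 2⁻¹ ^ j := by
    rw [← two_mul_quarter]
    refine (lintegral_biSup_enorm_le (B := B * 4⁻¹ ^ j) hp (fun w hw => ?_) (fun w hw => ?_)
      (hcard (j + 1))).trans_eq (by ring)
    · exact (hfm w (hTD _ hw)).sub (hfm _ (hTD _ (hπ j w hw)))
    · refine (hLip w (hTD _ hw) _ (hTD _ (hπ j w hw))).trans ?_
      gcongr
      simpa [ENNReal.inv_pow] using hπ_dist j w hw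
  have δ_tendsto : Tendsto (fun n : ℕ => ((1 : ℝ≥0) / 4) ^ n) atTop (𝓝 0) :=
    tendsto_pow_atTop_nhds_zero_of_lt_one (by simp) (by norm_num)
  calc ∫⁻ ω, ⨆ x ∈ D, ‖f ω x‖ₑ ∂P
      ≤ ∫⁻ ω, ⨆ x ∈ T 0, ‖f ω x‖ₑ ∂P
          + ∑' j, ∫⁻ ω, ⨆ w ∈ T (j + 1), ‖f ω w - f ω (π j w)‖ₑ ∂P :=
        lintegral_biSup_enorm_le_add_tsum δ_tendsto hTD hT hπ hf hfm
    _ ≤ A * B + ∑' j, 2 * A * B * 2⁻¹ ^ j := by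
        refine add_le_add (lintegral_biSup_enorm_le hp (fun x hx => hfm x (hTD 0 hx))
          (fun x hx => hB x (hTD 0 hx)) ?_) (ENNReal.tsum_le_tsum link)
        simpa using hcard 0
    _ = 5 * A * B := by
        rw [ENNReal.tsum_mul_left, ENNReal.tsum_geometric, ENNReal.one_sub_inv_two, inv_inv]
        ring

lemma aemeasurable_biSup_enorm_of_continuousOn (hD : TopologicalSpace.IsSeparable D)
    (hf : ∀ᵐ ω ∂P, ContinuousOn (f ω) D)
    (hfm : ∀ x ∈ D, AEStronglyMeasurable (fun ω => f ω x) P) :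
    AEMeasurable (fun ω => ⨆ x ∈ D, ‖f ω x‖ₑ) P := by
  obtain ⟨t, htD, ht_countable, hDt⟩ := hD.exists_countable_dense_subset
  refine (AEMeasurable.biSup t ht_countable fun x hx => (hfm x (htD hx)).enorm).congr ?_
  filter_upwards [hf] with ω hω
  refine le_antisymm (biSup_mono htD) (iSup₂_le fun x hx => ?_)
  have := mem_closure_iff_nhdsWithin_neBot.1 (hDt hx)
  refine le_of_tendsto ((hω x hx).mono htD).enorm (eventually_mem_nhdsWithin.mono fun y hy => ?_)
  exact le_iSup₂ (f := fun y (_ : y ∈ t) => ‖f ω y‖ₑ) y hy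

end Chaining

/-! ### Covering numbers of bounded sets -/

section CoveringNumbers

open scoped ENNReal NNReal

lemma exists_isCover_subset_of_isCover {X : Type*} [PseudoEMetricSpace X] {ε : ℝ≥0} {D : Set X}
    {S : Finset X} (hS : Metric.IsCover ε D (S : Set X)) :
    ∃ T : Finset X, (T : Set X) ⊆ D ∧ Metric.IsCover (2 * ε) D (T : Set X) ∧ T.card ≤ S.card := by
  have coveringNumber_le : Metric.coveringNumber (2 * ε) D ≤ S.card := by
    rw [← Set.encard_coe_eq_coe_finsetCard]
    exact (Metric.coveringNumber_two_mul_le_externalCoveringNumber ε D).trans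
      hS.externalCoveringNumber_le_encard
  have coveringNumber_ne_top := ne_top_of_le_ne_top (ENat.natCast_ne_top _) coveringNumber_le
  refine ⟨(Metric.finite_minimalCover (ε := 2 * ε) (A := D)).toFinset, ?_, ?_, ?_⟩
  · simpa using Metric.minimalCover_subset
  · simpa using Metric.isCover_minimalCover coveringNumber_ne_top
  · rw [← Nat.cast_le (α := ℕ∞), ← Set.encard_coe_eq_coe_finsetCard, Set.Finite.coe_toFinset,
      Metric.encard_minimalCover coveringNumber_ne_top]
    exact coveringNumber_le

variable {E : Type*} [NormedAddCommGroup E] [NormedSpace ℝ E]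

lemma exists_isCover_closedBall_pow {δ : ℝ≥0} (hδ : δ ≠ 0) {S : Finset E}
    (hS : Metric.IsCover δ (Metric.closedBall 0 1) (S : Set E)) (n : ℕ) :
    ∃ T : Finset E, Metric.IsCover (δ ^ n) (Metric.closedBall 0 1) (T : Set E) ∧
      T.card ≤ S.card ^ n := by
  classical
  simp only [Metric.isCover_iff_subset_iUnion_closedBall] at hS ⊢
  induction n with
  | zero => exact ⟨{0}, by simp, by simp⟩
  | succ n ih =>
    obtain ⟨T, hT, hcard⟩ := ih
    refine ⟨Finset.image₂ (fun y s => y + (δ : ℝ) ^ n • s) T S, fun x hx => ?_,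
      Finset.card_image₂_le .. |>.trans (by rw [pow_succ]; gcongr)⟩
    obtain ⟨y, hyT, hxy⟩ := Set.mem_iUnion₂.1 (hT hx)
    have δ_pow_pos : (0 : ℝ) < δ ^ n := by positivity
    have rescaled_mem : ((δ : ℝ) ^ n)⁻¹ • (x - y) ∈ Metric.closedBall (0 : E) 1 := by
      rw [mem_closedBall_zero_iff, norm_smul, norm_inv, Real.norm_of_nonneg δ_pow_pos.le,
        inv_mul_le_one₀ δ_pow_pos, ← dist_eq_norm]
      simpa using hxy
    obtain ⟨s, hsS, hs⟩ := Set.mem_iUnion₂.1 (hS rescaled_mem)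
    refine Set.mem_iUnion₂.2
      ⟨y + (δ : ℝ) ^ n • s, Finset.mem_coe.2 (Finset.mem_image₂_of_mem hyT hsS), ?_⟩
    rw [mem_closedBall_iff_norm] at hs ⊢
    calc ‖x - (y + (δ : ℝ) ^ n • s)‖ = ‖(δ : ℝ) ^ n • (((δ : ℝ) ^ n)⁻¹ • (x - y) - s)‖ := by
          rw [smul_sub, smul_inv_smul₀ δ_pow_pos.ne', sub_sub]
      _ ≤ δ ^ n * δ := by
          rw [norm_smul, Real.norm_of_nonneg δ_pow_pos.le]
          gcongr
      _ = ((δ ^ (n + 1) : ℝ≥0) : ℝ) := by push_cast; ring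

lemma exists_isCover_card_le [FiniteDimensional ℝ E] {D : Set E} (hD : Bornology.IsBounded D) :
    ∃ (A : ℝ≥0) (p : ℝ≥0), 1 ≤ p ∧ ∀ n : ℕ, ∃ T : Finset E, (T : Set E) ⊆ D ∧
      Metric.IsCover ((1 / 4) ^ n) D (T : Set E) ∧
      (T.card : ℝ≥0∞) ≤ (A * 2 ^ n) ^ (p : ℝ) := by
  classical
  obtain ⟨S, -, hS_fin, hS⟩ := Metric.exists_finite_isCover_of_isCompact
    (ε := 1 / 4) (by simp) (isCompact_closedBall (0 : E) 1)
  lift S to Finset E using hS_fin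
  obtain ⟨R, hR⟩ := hD.subset_closedBall 0
  obtain ⟨k, hk⟩ := pow_unbounded_of_one_lt R (by norm_num : (1 : ℝ) < 4)
  set p := S.card + 1
  have card_le : S.card ≤ 2 ^ p := S.card.le_succ.trans p.lt_two_pow_self.le
  refine ⟨2 ^ (k + 1), p, by simp [p], fun n => ?_⟩
  obtain ⟨T, hT, hT_card⟩ := exists_isCover_closedBall_pow (by simp) hS (n + (k + 1))
  have scaled_cover : Metric.IsCover ((1 / 4) ^ (n + 1)) D
      (T.image ((4 : ℝ) ^ k • ·) : Finset E) := by
    have D_subset : D ⊆ (fun x => (4 : ℝ) ^ k • x) '' Metric.closedBall 0 1 := by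
      rw [Set.image_smul, smul_unitClosedBall_of_nonneg (by positivity)]
      exact hR.trans (Metric.closedBall_subset_closedBall hk.le)
    rw [Finset.coe_image]
    convert! (hT.image_lipschitz (lipschitzWith_smul ((4 : ℝ) ^ k))).anti D_subset using 1
    rw [show n + (k + 1) = k + (n + 1) by ring, pow_add _ k, ← mul_assoc]
    simp [nnnorm_pow]
  obtain ⟨T', hT'D, hT', hT'_card⟩ := exists_isCover_subset_of_isCover scaled_cover
  refine ⟨T', hT'D, hT'.mono_radius ?_, ?_⟩
  · rw [pow_succ', ← mul_assoc]
    exact mul_le_of_le_one_left zero_le (by rw [← NNReal.coe_le_coe]; norm_num)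
  · have : T'.card ≤ (2 ^ (k + 1) * 2 ^ n) ^ p := calc
      T'.card ≤ T.card := hT'_card.trans Finset.card_image_le
      _ ≤ (2 ^ p) ^ (n + (k + 1)) := hT_card.trans (by gcongr)
      _ = (2 ^ (k + 1) * 2 ^ n) ^ p := by ring
    rw [NNReal.coe_natCast, ENNReal.rpow_natCast]
    exact_mod_cast this

end CoveringNumbers

/-! ### Gaussian fields -/

section GaussianField

open scoped ENNReal NNReal

universe u

lemma exists_const_lintegral_biSup_enorm_le {E : Type*} [NormedAddCommGroup E] [NormedSpace ℝ E]
    [FiniteDimensional ℝ E] {D : Set E} (hD : Bornology.IsBounded D) :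
    ∃ C : ℝ≥0, ∀ {Ω : Type u} [MeasurableSpace Ω] {P : Measure Ω} [IsProbabilityMeasure P]
      {H : Submodule ℝ (Lp ℝ 2 P)} {Y : E → Lp ℝ 2 P} {f : Ω → E → ℝ} {σ : ℝ≥0},
      IsGaussianHilbertSpace H → RepresentsOn H D Y f → (∀ᵐ ω ∂P, ContinuousOn (f ω) D) →
      (∀ x ∈ D, ‖Y x‖₊ ≤ σ) → LipschitzOnWith σ Y D →
      ∫⁻ ω, ⨆ x ∈ D, ‖f ω x‖ₑ ∂P ≤ C * σ := by
  obtain ⟨A, p, hp, hcover⟩ := exists_isCover_card_le hD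
  choose T hTD hT hcard using hcover
  set κ := eLpNorm id p (gaussianReal 0 1)
  have κ_ne_top : κ ≠ ∞ := (memLp_id_gaussianReal p).eLpNorm_ne_top
  refine ⟨5 * A * κ.toNNReal, fun {Ω _ P _ H Y f σ} hH hY hf hσ hLip => ?_⟩
  have eLpNorm_value (x : E) (hx : x ∈ D) : eLpNorm (fun ω => f ω x) p P ≤ σ * κ := by
    rw [← eLpNorm_congr_ae (hY x hx).2, hH.eLpNorm_eq (hY x hx).1]
    gcongr
    exact_mod_cast hσ x hx
  have eLpNorm_increment (x : E) (hx : x ∈ D) (y : E) (hy : y ∈ D) :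
      eLpNorm (fun ω => f ω x - f ω y) p P ≤ σ * κ * edist x y := by
    have ae_eq : ⇑(Y x - Y y) =ᵐ[P] fun ω => f ω x - f ω y :=
      (Lp.coeFn_sub _ _).trans ((hY x hx).2.sub (hY y hy).2)
    rw [← eLpNorm_congr_ae ae_eq, hH.eLpNorm_eq (H.sub_mem (hY x hx).1 (hY y hy).1),
      mul_right_comm, ← edist_eq_enorm_sub]
    gcongr
    exact hLip hx hy
  refine (lintegral_biSup_enorm_le_of_isCover hp hTD hT hcard hf
    (fun _ hx => hY.aestronglyMeasurable hx) eLpNorm_value eLpNorm_increment).trans_eq ?_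
  push_cast [ENNReal.coe_toNNReal κ_ne_top]
  ring

variable {Ω : Type*} [MeasurableSpace Ω] {P : Measure Ω} [IsProbabilityMeasure P]

lemma exists_representsOn_apply {E ι : Type*} [Fintype ι] {U : Set E} {X : Ω → E → ι → ℝ}
    (hX : ∀ (j : ℕ) (p : Fin j → E), (∀ i, p i ∈ U) → ∀ c : Fin j → ι → ℝ, ∃ v : ℝ≥0,
      P.map (fun ω => ∑ i, ∑ l, c i l * X ω (p i) l) = gaussianReal 0 v) :
    ∃ (H : Submodule ℝ (Lp ℝ 2 P)) (Y : ι → E → Lp ℝ 2 P), IsGaussianHilbertSpace H ∧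
      ∀ i, RepresentsOn H U (Y i) (fun ω x => X ω x i) := by
  classical
  obtain ⟨H, Y, hH, hY⟩ := exists_isGaussianHilbertSpace (P := P) (s := U ×ˢ Set.univ)
    (ξ := fun (q : E × ι) ω => X ω q.1 q.2) fun n t ht c => by
      simpa [ite_mul] using hX n (fun i => (t i).1) (fun i => (ht i).1)
        fun i l => if (t i).2 = l then c i else 0
  exact ⟨H, fun i x => Y (x, i), hH, fun i x hx => hY (x, i) ⟨hx, trivial⟩⟩

lemma RepresentsOn.exists_bounded_lipschitzOnWith {m : ℕ} {H : Submodule ℝ (Lp ℝ 2 P)}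
    {U D : Set (EuclideanSpace ℝ (Fin m))} {Y : EuclideanSpace ℝ (Fin m) → Lp ℝ 2 P}
    {f : Ω → EuclideanSpace ℝ (Fin m) → ℝ} {N : ℝ} {α : Fin m → ℕ} {r : ℕ}
    (hY : RepresentsOn H U Y f) (hH : IsGaussianHilbertSpace H) (hU : IsOpen U)
    (hD : Convex ℝ D) (hDU : D ⊆ U) (hf : ∀ᵐ ω ∂P, ContDiffOn ℝ r (f ω) U)
    (hN : ∀ β : Fin m → ℕ, ∑ l, β l ≤ r → ∀ x ∈ D,
      mixedLineDeriv β β (fun a b => ∫ ω, f ω a * f ω b ∂P) x x ≤ N)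
    (hα : ∑ l, α l < r) :
    ∃ Y' : EuclideanSpace ℝ (Fin m) → Lp ℝ 2 P,
      RepresentsOn H U Y' (fun ω => iterLineDeriv (multiIndexList α) (f ω)) ∧
      (∀ x ∈ D, ‖Y' x‖ ≤ √N) ∧ LipschitzOnWith (m * (√N).toNNReal) Y' D := by
  have contDiffOn_of_le {n : ℕ} (hn : n ≤ r) : ∀ᵐ ω ∂P, ContDiffOn ℝ n (f ω) U :=
    hf.mono fun ω hω => hω.of_le (by exact_mod_cast hn)
  have exists_deriv (β : Fin m → ℕ) (hβ : ∑ l, β l ≤ r) :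
      ∃ Y' : EuclideanSpace ℝ (Fin m) → Lp ℝ 2 P,
        RepresentsOn H U Y' (fun ω => iterLineDeriv (multiIndexList β) (f ω)) ∧
        ∀ x ∈ D, ‖Y' x‖ ≤ √N := by
    obtain ⟨Y', hY', hnorm⟩ := hY.exists_norm_sq_eq_mixedLineDeriv hH hU (contDiffOn_of_le hβ)
    exact ⟨Y', hY', fun x hx => Real.le_sqrt_of_sq_le ((hnorm x (hDU hx)).trans_le (hN β hβ x hx))⟩
  obtain ⟨Y₀, hY₀, hbound⟩ := exists_deriv α hα.le
  choose Y₁ hY₁ hbound₁ using fun l => exists_deriv (α + Pi.single l 1)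
    (by simpa [Finset.sum_add_distrib] using hα)
  refine ⟨Y₀, hY₀, hbound, LipschitzOnWith.of_dist_le_mul fun x hx y hy => ?_⟩
  rw [dist_eq_norm, dist_eq_norm, NNReal.coe_mul, NNReal.coe_natCast,
    Real.coe_toNNReal _ N.sqrt_nonneg]
  exact hY₀.norm_sub_le hY₁ hH hU hD hDU (contDiffOn_of_le hα) hbound₁ hy hx

lemma exists_const_lintegral_biSup_iterLineDeriv_le {m : ℕ} {D : Set (EuclideanSpace ℝ (Fin m))}
    (hD : Convex ℝ D) (hD_bdd : Bornology.IsBounded D) :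
    ∃ C : ℝ≥0, ∀ {Ω : Type u} [MeasurableSpace Ω] {P : Measure Ω} [IsProbabilityMeasure P]
      {H : Submodule ℝ (Lp ℝ 2 P)} {U : Set (EuclideanSpace ℝ (Fin m))}
      {Y : EuclideanSpace ℝ (Fin m) → Lp ℝ 2 P} {f : Ω → EuclideanSpace ℝ (Fin m) → ℝ}
      {N : ℝ} {r : ℕ} {α : Fin m → ℕ},
      IsGaussianHilbertSpace H → IsOpen U → D ⊆ U → RepresentsOn H U Y f →
      (∀ᵐ ω ∂P, ContDiffOn ℝ r (f ω) U) →
      (∀ β : Fin m → ℕ, ∑ l, β l ≤ r → ∀ x ∈ D,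
        mixedLineDeriv β β (fun a b => ∫ ω, f ω a * f ω b ∂P) x x ≤ N) →
      ∑ l, α l < r →
      AEMeasurable (fun ω => ⨆ x ∈ D, ‖iterLineDeriv (multiIndexList α) (f ω) x‖ₑ) P ∧
        ∫⁻ ω, ⨆ x ∈ D, ‖iterLineDeriv (multiIndexList α) (f ω) x‖ₑ ∂P
          ≤ C * ENNReal.ofReal √N := by
  obtain ⟨C, hC⟩ := exists_const_lintegral_biSup_enorm_le hD_bdd
  refine ⟨C * (m + 1), fun {Ω _ P _ H U Y f N r α} hH hU hDU hY hf hN hα => ?_⟩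
  obtain ⟨Y', hY', hbound, hLip⟩ := hY.exists_bounded_lipschitzOnWith hH hU hD hDU hf hN hα
  have continuousOn : ∀ᵐ ω ∂P, ContinuousOn (iterLineDeriv (multiIndexList α) (f ω)) D := by
    filter_upwards [hf] with ω hω
    refine ((contDiffOn_iterLineDeriv (n := 0) hU _ (hω.of_le ?_)).continuousOn).mono hDU
    rw [zero_add, length_multiIndexList]
    exact_mod_cast hα.le
  have hY'D : RepresentsOn H D Y' _ := fun x hx => hY' x (hDU hx)
  refine ⟨aemeasurable_biSup_enorm_of_continuousOn (.of_separableSpace D) continuousOn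
    fun x hx => hY'D.aestronglyMeasurable hx, ?_⟩
  refine (hC (σ := (m + 1) * (√N).toNNReal) hH hY'D continuousOn (fun x hx => ?_)
    (hLip.weaken (by gcongr; exact le_self_add))).trans_eq ?_
  · calc ‖Y' x‖₊ ≤ (√N).toNNReal := NNReal.le_toNNReal_of_coe_le (hbound x hx)
      _ ≤ (m + 1) * (√N).toNNReal := le_mul_of_one_le_left' le_add_self
  · rw [ENNReal.ofReal]
    push_cast
    ring

theorem exists_const_expectation_Cr_norm_le_sqrt_covariance_general
    {m : ℕ} {D : Set (EuclideanSpace ℝ (Fin m))} (hD : Convex ℝ D)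
    (hD_bdd : Bornology.IsBounded D) {r : ℕ} (hr : 1 ≤ r) (k : ℕ) :
    ∃ C : ℝ, 0 < C ∧
      ∀ (Ω : Type u) (_ : MeasurableSpace Ω) (P : Measure Ω) (_ : IsProbabilityMeasure P)
        (U : Set (EuclideanSpace ℝ (Fin m))) (_ : IsOpen U) (_ : D ⊆ U)
        (X : Ω → EuclideanSpace ℝ (Fin m) → Fin k → ℝ),
        (∀ᵐ ω ∂P, ContDiffOn ℝ r (X ω) U) →
        (∀ (j : ℕ) (p : Fin j → EuclideanSpace ℝ (Fin m)), (∀ i, p i ∈ U) →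
          ∀ c : Fin j → Fin k → ℝ, ∃ v : NNReal,
            P.map (fun ω => ∑ i, ∑ l, c i l * X ω (p i) l) = gaussianReal 0 v) →
        ∀ N : ℝ,
          (∀ (i : Fin k) (α : Fin m → ℕ), (∑ l, α l) ≤ r → ∀ x ∈ D,
            mixedLineDeriv α α (fun a b => ∫ ω, X ω a i * X ω b i ∂P) x x ≤ N) →
          ∫⁻ ω, ⨆ (α : Fin m → ℕ) (_ : (∑ l, α l) ≤ r - 1) (i : Fin k)
              (x : EuclideanSpace ℝ (Fin m)) (_ : x ∈ D),
              ENNReal.ofReal |iterLineDeriv (multiIndexList α) (fun t => X ω t i) x| ∂P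
            ≤ ENNReal.ofReal (C * Real.sqrt N) := by
  obtain ⟨C, hC⟩ := exists_const_lintegral_biSup_iterLineDeriv_le hD hD_bdd
  have orders_finite : {α : Fin m → ℕ | ∑ l, α l ≤ r - 1}.Finite :=
    (Set.finite_Iic fun _ => r - 1).subset fun α hα l =>
      (Finset.single_le_sum_of_canonicallyOrdered (Finset.mem_univ l)).trans hα
  set S := orders_finite.toFinset ×ˢ (Finset.univ : Finset (Fin k))
  refine ⟨S.card * C + 1, by positivity, fun Ω _ P _ U hU hDU X hX hgauss N hN => ?_⟩
  obtain ⟨H, Y, hH, hY⟩ := exists_representsOn_apply hgauss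
  let M (q : (Fin m → ℕ) × Fin k) (ω : Ω) : ENNReal :=
    ⨆ x ∈ D, ‖iterLineDeriv (multiIndexList q.1) (X ω · q.2) x‖ₑ
  have M_bound (q) (hq : q ∈ S) :
      AEMeasurable (M q) P ∧ ∫⁻ ω, M q ω ∂P ≤ C * ENNReal.ofReal √N :=
    hC hH hU hDU (hY q.2)
      (hX.mono fun ω hω => contDiffOn_pi.1 hω q.2) (hN q.2) <| by
        have : ∑ l, q.1 l ≤ r - 1 := by simpa [S] using hq
        omega
  calc _ ≤ ∫⁻ ω, ⨆ q ∈ S, ‖M q ω‖ₑ ∂P := by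
        refine lintegral_mono fun ω => iSup₂_le fun α hα => iSup_le fun i =>
          le_iSup₂_of_le (α, i) (by simpa [S] using hα) ?_
        simp only [M, enorm_eq_self, Real.enorm_eq_ofReal_abs, le_refl]
    _ ≤ S.card * (C * ENNReal.ofReal √N) := by
        refine lintegral_biSup_enorm_le le_rfl
          (fun q hq => (M_bound q hq).1.aestronglyMeasurable) (fun q hq => ?_) (by simp)
        simpa [eLpNorm_one_eq_lintegral_enorm] using (M_bound q hq).2
    _ ≤ ENNReal.ofReal ((S.card * C + 1) * √N) := by
        rw [← mul_assoc, ENNReal.ofReal_mul (by positivity)]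
        gcongr
        rw [ENNReal.ofReal_add (by positivity) zero_le_one, ENNReal.ofReal_mul (by positivity),
          ENNReal.ofReal_natCast, ENNReal.ofReal_coe_nnreal]
        exact le_self_add

end GaussianField

/-- Let `D ⊆ ℝ^m` be a closed Euclidean ball, `r ≥ 1`, `k ≥ 1`.  There is a constant
`C = C(D,r,k) > 0` such that for every centered Gaussian process `X` with values in `ℝ^k`,
defined on an open neighborhood `U` of `D`, with almost surely `C^r` sample paths, whose
covariance function `K_X` has (continuous) partial derivatives of order `≤ r` in each of the
two variables, and every bound `N` on all the entries `∂_x^α ∂_y^β K_X^{i,j}` on `D × D` for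
`|α|, |β| ≤ r`, one has
`E[ max_{|α| ≤ r−1, i ≤ k} sup_{x ∈ D} |∂^α X^i(x)| ] ≤ C · √N`. -/
theorem exists_const_expectation_Cr_norm_le_sqrt_covariance
    {m : ℕ} (x₀ : EuclideanSpace ℝ (Fin m)) (R : ℝ) (hR : 0 ≤ R)
    (r k : ℕ) (hr : 1 ≤ r) (hk : 1 ≤ k) :
    ∃ C : ℝ, 0 < C ∧
      ∀ (Ω : Type) (_ : MeasurableSpace Ω) (P : Measure Ω) (_ : IsProbabilityMeasure P)
        (U : Set (EuclideanSpace ℝ (Fin m))) (_ : IsOpen U)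
        (_ : Metric.closedBall x₀ R ⊆ U)
        (X : Ω → EuclideanSpace ℝ (Fin m) → Fin k → ℝ),
        -- almost surely `C^r` sample paths on `U`
        (∀ᵐ ω ∂P, ContDiffOn ℝ r (X ω) U) →
        -- `X` is a centered Gaussian process on `U` with values in `ℝ^k`
        (∀ (j : ℕ) (p : Fin j → EuclideanSpace ℝ (Fin m)), (∀ i, p i ∈ U) →
          ∀ c : Fin j → Fin k → ℝ, ∃ v : NNReal,
            P.map (fun ω => ∑ i, ∑ l, c i l * X ω (p i) l) = gaussianReal 0 v) →
        -- each entry of the covariance function has continuous partial derivatives of order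
        -- `≤ r` in each of the two variables, on `U`
        (∀ (i j : Fin k) (α β : Fin m → ℕ), (∑ l, α l) ≤ r → (∑ l, β l) ≤ r →
          (∀ x' ∈ U, HasLinePartialsOn U (multiIndexList β)
              (fun y' => ∫ ω, X ω x' i * X ω y' j ∂P)) ∧
          (∀ y ∈ U, HasLinePartialsOn U (multiIndexList α)
              (fun x' => iterLineDeriv (multiIndexList β)
                (fun y' => ∫ ω, X ω x' i * X ω y' j ∂P) y)) ∧
          ContinuousOn (fun q : EuclideanSpace ℝ (Fin m) × EuclideanSpace ℝ (Fin m) =>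
              mixedLineDeriv α β (fun a b => ∫ ω, X ω a i * X ω b j ∂P) q.1 q.2)
            (U ×ˢ U)) →
        -- conclusion: for any `N` bounding on `D × D` all the mixed derivatives of orders
        -- `≤ r` of all the entries of `K_X`, one has
        -- `E[max_{|α| ≤ r−1, i} sup_D |∂^α X^i|] ≤ C √N`
        ∀ N : ℝ,
          (∀ (i j : Fin k) (α β : Fin m → ℕ), (∑ l, α l) ≤ r → (∑ l, β l) ≤ r →
            ∀ x ∈ Metric.closedBall x₀ R, ∀ y ∈ Metric.closedBall x₀ R,
              |mixedLineDeriv α β (fun a b => ∫ ω, X ω a i * X ω b j ∂P) x y| ≤ N) →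
          ∫⁻ ω, ⨆ (α : Fin m → ℕ) (_ : (∑ l, α l) ≤ r - 1) (i : Fin k)
              (x : EuclideanSpace ℝ (Fin m)) (_ : x ∈ Metric.closedBall x₀ R),
              ENNReal.ofReal |iterLineDeriv (multiIndexList α) (fun t => X ω t i) x| ∂P
            ≤ ENNReal.ofReal (C * Real.sqrt N) := by
  obtain ⟨C, hC_pos, hC⟩ := exists_const_expectation_Cr_norm_le_sqrt_covariance_general
    (convex_closedBall x₀ R) Metric.isBounded_closedBall hr k
  exact ⟨C, hC_pos, fun Ω _ P hP U hU hDU X hX hgauss _ N hN =>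
    hC Ω _ P hP U hU hDU X hX hgauss N
      fun i α hα x hx => (le_abs_self _).trans (hN i i α α hα hα x hx x hx)⟩
end

section
/- There exists a sequence (X_n) of centered Gaussian processes on [0,1] with values in ℝ, defined on some probability space, with almost surely smooth (C^∞) sample paths, such that sup_{s,t∈[0,1]} |K_{X_n}(s,t)| → 0 as n → ∞ while P( sup_{t∈[0,1]} |X_n(t)| < 1 ) → 0; in particular liminf_{n→∞} E[ sup_{t∈[0,1]} |X_n(t)| ] ≥ 1, so the laws of X_n on C([0,1],ℝ) do not converge narrowly to the Dirac measure at the zero function even though the covariance functions converge uniformly to 0. -/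
open MeasureTheory ProbabilityTheory Filter Topology ENNReal
open scoped BoundedContinuousFunction

/-!
Let `f₀, f₁, …` be smooth bumps with disjoint supports and maximum `1` inside `[0,1]`, let
`ξ₀, ξ₁, …` be independent standard Gaussians, and put `X_n = c_n ∑_{k < N_n} ξ_k f_k` with
`0 < c_n → 0`. At each point at most one bump is nonzero, so the covariance of `X_n` is at most
`c_n²` whatever `N_n` is. On the other hand `sup |X_n| ≥ c_n max_{k < N_n} |ξ_k|`, and since the
Gaussian law charges the complement of every bounded interval, this is at least `1` with probability
tending to `1` once `N_n` grows fast enough. The lower bound on the expected supremum is then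
Markov's inequality, and the failure of narrow convergence is the portmanteau theorem for the open
unit ball. Disjointness of the supports is encoded as `f k x * f l x = 0` for `k ≠ l`.
-/

lemma exists_contDiff_pairwise_mul_eq_zero {E : Type*} [NormedAddCommGroup E]
    [NormedSpace ℝ E] [FiniteDimensional ℝ E] {U : Set E} (hU : IsOpen U) (hU_inf : U.Infinite)
    {c : ℝ} (hc : 0 ≤ c) :
    ∃ (f : ℕ → C(E, ℝ)) (t : ℕ → E), (∀ k, ContDiff ℝ (⊤ : ℕ∞) (f k)) ∧ (∀ k x, |f k x| ≤ c) ∧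
      (∀ x, Pairwise fun k l => f k x * f l x = 0) ∧ (∀ k, t k ∈ U) ∧ ∀ k, f k (t k) = c := by
  have := hU_inf.to_subtype
  obtain ⟨V, hV_inf, hV_open, hV_disj⟩ := exists_seq_infinite_isOpen_pairwise_disjoint U
  choose t ht using fun k => (hV_inf k).nonempty
  have hV_nhds (k : ℕ) : (↑) '' V k ∈ 𝓝 (t k : E) :=
    (hU.isOpenMap_subtype_val _ (hV_open k)).mem_nhds (Set.mem_image_of_mem _ (ht k))
  choose f hf_supp _ hf_smooth hf_range hf_one using fun k =>
    exists_contDiff_tsupport_subset (n := ⊤) (hV_nhds k)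
  refine ⟨fun k => ⟨fun x => c * f k x, (hf_smooth k).continuous.const_mul c⟩, fun k => t k,
    fun k => contDiff_const.mul (hf_smooth k), fun k x => ?_, fun x k l hkl => ?_,
    fun k => (t k).2, fun k => ?_⟩
  · have hx := hf_range k (Set.mem_range_self x)
    rw [ContinuousMap.coe_mk, abs_of_nonneg (mul_nonneg hc hx.1)]
    exact mul_le_of_le_one_right hc hx.2
  · have h_disj : Disjoint (((↑) : U → E) '' V k) ((↑) '' V l) :=
      (Set.disjoint_image_iff Subtype.val_injective).2 (hV_disj hkl)
    by_contra h_ne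
    exact h_disj.notMem_of_mem_left
      (hf_supp k (subset_tsupport _ (right_ne_zero_of_mul (left_ne_zero_of_mul h_ne))))
      (hf_supp l (subset_tsupport _ (right_ne_zero_of_mul (right_ne_zero_of_mul h_ne))))
  · rw [ContinuousMap.coe_mk, hf_one, mul_one]

section PairwiseMulEqZero

variable {ι : Type*} {a : ι → ℝ}

lemma sum_mul_eq_of_pairwise_mul_eq_zero (ha : Pairwise fun k l => a k * a l = 0) (b : ι → ℝ)
    {s : Finset ι} {k : ι} (hk : k ∈ s) (hak : a k ≠ 0) : ∑ l ∈ s, b l * a l = b k * a k :=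
  Finset.sum_eq_single_of_mem k hk fun l _ hlk => by
    rw [(mul_eq_zero_iff_right hak).1 (ha hlk), mul_zero]

lemma abs_mul_le_abs_sum_mul_of_pairwise_mul_eq_zero (ha : Pairwise fun k l => a k * a l = 0)
    (b : ι → ℝ) {s : Finset ι} {k : ι} (hk : k ∈ s) : |b k * a k| ≤ |∑ l ∈ s, b l * a l| := by
  by_cases hak : a k = 0
  · simp [hak]
  · rw [sum_mul_eq_of_pairwise_mul_eq_zero ha b hk hak]

lemma abs_sum_mul_le_of_pairwise_mul_eq_zero (ha : Pairwise fun k l => a k * a l = 0)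
    {b : ι → ℝ} {C : ℝ} (hC : 0 ≤ C) (hbaC : ∀ k, |b k * a k| ≤ C) (s : Finset ι) :
    |∑ k ∈ s, b k * a k| ≤ C := by
  by_cases h_zero : ∀ k ∈ s, b k * a k = 0
  · simpa only [Finset.sum_eq_zero h_zero, abs_zero] using hC
  · push Not at h_zero
    obtain ⟨k, hk, hbak⟩ := h_zero
    rw [sum_mul_eq_of_pairwise_mul_eq_zero ha b hk (right_ne_zero_of_mul hbak)]
    exact hbaC k

end PairwiseMulEqZero

section Probability

variable {Ω : Type*} [MeasurableSpace Ω] {P : Measure Ω}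

section Limits

variable [IsProbabilityMeasure P] {κ : Type*} {l : Filter κ} [l.NeBot]

lemma le_liminf_lintegral_of_tendsto_measure_lt {Z : κ → Ω → ℝ≥0∞}
    (hZ : ∀ n, AEMeasurable (Z n) P) {r : ℝ≥0∞}
    (h : Tendsto (fun n => P {ω | Z n ω < r}) l (𝓝 0)) :
    r ≤ liminf (fun n => ∫⁻ ω, Z n ω ∂P) l := by
  have h_compl (n : κ) : P {ω | r ≤ Z n ω} = 1 - P {ω | Z n ω < r} := by
    rw [← prob_compl_eq_one_sub₀ (nullMeasurableSet_lt (hZ n) aemeasurable_const)]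
    simp only [Set.compl_ofPred, not_lt]
  have h_ge : Tendsto (fun n => r * P {ω | r ≤ Z n ω}) l (𝓝 r) := by
    simpa only [h_compl, tsub_zero, mul_one] using
      ENNReal.Tendsto.const_mul (a := r)
        (ENNReal.Tendsto.sub tendsto_const_nhds h (.inl one_ne_top)) (.inl (by simp))
  calc r = liminf (fun n => r * P {ω | r ≤ Z n ω}) l := h_ge.liminf_eq.symm
    _ ≤ liminf (fun n => ∫⁻ ω, Z n ω ∂P) l :=
      liminf_le_liminf (.of_forall fun n => mul_meas_ge_le_lintegral₀ (hZ n) r)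

lemma not_forall_tendsto_integral_of_tendsto_measure_mem {E : Type*} [TopologicalSpace E]
    [MeasurableSpace E] [OpensMeasurableSpace E] [HasOuterApproxClosed E] {Z : κ → Ω → E}
    (hZ : ∀ n, AEMeasurable (Z n) P) {x : E} {U : Set E} (hU : U ∈ 𝓝 x)
    (h : Tendsto (fun n => P {ω | Z n ω ∈ U}) l (𝓝 0)) :
    ¬ ∀ φ : E →ᵇ ℝ, Tendsto (fun n => ∫ ω, φ (Z n ω) ∂P) l (𝓝 (φ x)) := by
  intro h_narrow
  let law (n : κ) : ProbabilityMeasure E := ⟨P.map (Z n), Measure.isProbabilityMeasure_map (hZ n)⟩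
  have h_law : Tendsto law l (𝓝 (diracProba x)) := by
    refine ProbabilityMeasure.tendsto_iff_forall_integral_tendsto.2 fun φ => ?_
    have h_map (n : κ) : ∫ y, φ y ∂(law n : Measure E) = ∫ ω, φ (Z n ω) ∂P :=
      integral_map (hZ n) φ.continuous.stronglyMeasurable.aestronglyMeasurable
    have h_dirac : ∫ y, φ y ∂(diracProba x : Measure E) = φ x :=
      integral_dirac' _ _ φ.continuous.stronglyMeasurable
    simpa only [h_map, h_dirac] using h_narrow φ
  have h_interior : Tendsto (fun n => (law n : Measure E) (interior U)) l (𝓝 0) := by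
    refine tendsto_of_tendsto_of_tendsto_of_le_of_le tendsto_const_nhds h (fun _ => zero_le)
      fun n => ?_
    rw [ProbabilityMeasure.coe_mk,
      Measure.map_apply_of_aemeasurable (hZ n) isOpen_interior.measurableSet]
    exact measure_mono (Set.preimage_mono interior_subset)
  have h_portmanteau :=
    ProbabilityMeasure.le_liminf_measure_open_of_tendsto h_law (isOpen_interior (s := U))
  rw [h_interior.liminf_eq, diracProba_toMeasure_apply_of_mem (mem_interior_iff_mem_nhds.2 hU)]
    at h_portmanteau
  exact not_lt_of_ge h_portmanteau one_pos

end Limits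

section Independence

variable {𝓧 : Type*} [MeasurableSpace 𝓧] {μ : Measure 𝓧} {ξ : ℕ → Ω → 𝓧}

lemma tendsto_measure_forall_mem_range_mem (hξ : ∀ k, HasLaw (ξ k) μ P)
    (hind : iIndepFun ξ P) {S : Set 𝓧} (hS : MeasurableSet S) (hμS : μ S < 1) :
    Tendsto (fun N : ℕ => P {ω | ∀ k ∈ Finset.range N, ξ k ω ∈ S}) atTop (𝓝 0) := by
  have h_preimage (k : ℕ) : P (ξ k ⁻¹' S) = μ S := by
    rw [← (hξ k).map_eq, Measure.map_apply_of_aemeasurable (hξ k).aemeasurable hS]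
  have h_pow (N : ℕ) : P {ω | ∀ k ∈ Finset.range N, ξ k ω ∈ S} = μ S ^ N := by
    calc P {ω | ∀ k ∈ Finset.range N, ξ k ω ∈ S} = P (⋂ k ∈ Finset.range N, ξ k ⁻¹' S) := by
          congr 1; ext ω; simp
      _ = ∏ k ∈ Finset.range N, P (ξ k ⁻¹' S) :=
          hind.meas_biInter fun k _ => ⟨S, hS, rfl⟩
      _ = μ S ^ N := by
          simp only [h_preimage, Finset.prod_const, Finset.card_range]
  simpa only [h_pow] using ENNReal.tendsto_pow_atTop_nhds_zero_of_lt_one hμS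

lemma exists_tendsto_measure_forall_mem_range_mem (hξ : ∀ k, HasLaw (ξ k) μ P)
    (hind : iIndepFun ξ P) {S : ℕ → Set 𝓧} (hS : ∀ n, MeasurableSet (S n))
    (hμS : ∀ n, μ (S n) < 1) :
    ∃ N : ℕ → ℕ, Tendsto (fun n => P {ω | ∀ k ∈ Finset.range (N n), ξ k ω ∈ S n}) atTop (𝓝 0) := by
  have h_small (n : ℕ) : ∃ N : ℕ, P {ω | ∀ k ∈ Finset.range N, ξ k ω ∈ S n} < (n : ℝ≥0∞)⁻¹ :=
    ((tendsto_measure_forall_mem_range_mem hξ hind (hS n) (hμS n)).eventually_lt_const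
      (ENNReal.inv_pos.2 (natCast_ne_top n))).exists
  choose N hN using h_small
  exact ⟨N, tendsto_of_tendsto_of_tendsto_of_le_of_le tendsto_const_nhds
    ENNReal.tendsto_inv_nat_nhds_zero (fun _ => zero_le) fun n => (hN n).le⟩

end Independence

lemma gaussianReal_lt_one_of_volume_ne_top (m : ℝ) {v : NNReal} (hv : v ≠ 0) {S : Set ℝ}
    (hS : MeasurableSet S) (hS_fin : volume S ≠ ∞) : gaussianReal m v S < 1 := by
  refine prob_le_one.lt_of_ne fun h => ?_
  have h_compl : volume Sᶜ = 0 :=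
    gaussianReal_absolutelyContinuous' m hv ((prob_compl_eq_zero_iff hS).2 h)
  have h_univ := measure_add_measure_compl (μ := volume) hS
  rw [h_compl, add_zero, Real.volume_univ] at h_univ
  exact hS_fin h_univ

end Probability

section RandomSum

variable {ι Ω E : Type*}

/-- The finite random combination `∑ k ∈ s, ξ k • f k`, as an `E`-valued function on the sample
space. Taking `E = ℝ`, `E = α → ℝ` or `E = C(K, ℝ)` gives its values at a point, its sample paths
and the random element of `C(K, ℝ)` it defines, respectively. -/
def randomSum [AddCommMonoid E] [Module ℝ E] (ξ : ι → Ω → ℝ) (f : ι → E) (s : Finset ι) (ω : Ω) :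
    E :=
  ∑ k ∈ s, ξ k ω • f k

lemma map_randomSum {F : Type*} [AddCommMonoid E] [Module ℝ E] [AddCommMonoid F] [Module ℝ F]
    (L : E →ₗ[ℝ] F) (ξ : ι → Ω → ℝ) (f : ι → E) (s : Finset ι) (ω : Ω) :
    L (randomSum ξ f s ω) = randomSum ξ (fun k => L (f k)) s ω := by
  simp only [randomSum, map_sum, map_smul]

lemma randomSum_apply {α : Type*} (ξ : ι → Ω → ℝ) (f : ι → α → ℝ) (s : Finset ι) (ω : Ω) (x : α) :
    randomSum ξ f s ω x = randomSum ξ (fun k => f k x) s ω :=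
  map_randomSum (LinearMap.proj x) ξ f s ω

lemma randomSum_continuousMap_apply {α : Type*} [TopologicalSpace α] (ξ : ι → Ω → ℝ)
    (f : ι → C(α, ℝ)) (s : Finset ι) (ω : Ω) (x : α) :
    randomSum ξ f s ω x = randomSum ξ (fun k => f k x) s ω :=
  map_randomSum (ContinuousMap.evalCLM ℝ x).toLinearMap ξ f s ω

lemma randomSum_restrict_apply {α : Type*} [TopologicalSpace α] {K : Set α} (ξ : ι → Ω → ℝ)
    (f : ι → C(α, ℝ)) (s : Finset ι) (ω : Ω) (x : K) :
    randomSum ξ (fun k => (f k).restrict K) s ω x = randomSum ξ (fun k => ⇑(f k)) s ω x := by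
  simp only [randomSum_apply, randomSum_continuousMap_apply, ContinuousMap.restrict_apply]

lemma contDiff_randomSum {V : Type*} [NormedAddCommGroup V] [NormedSpace ℝ V] {n : WithTop ℕ∞}
    (ξ : ι → Ω → ℝ) {f : ι → V → ℝ} (hf : ∀ k, ContDiff ℝ n (f k)) (s : Finset ι) (ω : Ω) :
    ContDiff ℝ n (randomSum ξ f s ω) := by
  have h_eq : randomSum ξ f s ω = fun x => ∑ k ∈ s, ξ k ω • f k x := by
    ext x; exact randomSum_apply ξ f s ω x
  rw [h_eq]
  exact ContDiff.sum fun k _ => (hf k).const_smul (ξ k ω)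

lemma abs_mul_le_norm_randomSum {K : Type*} [TopologicalSpace K] [CompactSpace K]
    (ξ : ι → Ω → ℝ) {f : ι → C(K, ℝ)} {x : K} (hf : Pairwise fun k l => f k x * f l x = 0)
    {s : Finset ι} {k : ι} (hk : k ∈ s) (ω : Ω) :
    |ξ k ω * f k x| ≤ ‖randomSum ξ f s ω‖ :=
  calc |ξ k ω * f k x| ≤ |∑ l ∈ s, ξ l ω * f l x| :=
        abs_mul_le_abs_sum_mul_of_pairwise_mul_eq_zero hf (fun l => ξ l ω) hk
    _ = ‖randomSum ξ f s ω x‖ := by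
        rw [randomSum_continuousMap_apply, Real.norm_eq_abs]; rfl
    _ ≤ ‖randomSum ξ f s ω‖ := (randomSum ξ f s ω).norm_coe_le_norm x

lemma setOf_norm_randomSum_lt_subset {K : Type*} [TopologicalSpace K] [CompactSpace K]
    (ξ : ι → Ω → ℝ) {f : ι → C(K, ℝ)} (hf : ∀ x, Pairwise fun k l => f k x * f l x = 0)
    {t : ι → K} {c : ℝ} (hc : 0 < c) (hft : ∀ k, f k (t k) = c) (s : Finset ι) (r : ℝ) :
    {ω | ‖randomSum ξ f s ω‖ < r} ⊆ {ω | ∀ k ∈ s, ξ k ω ∈ Metric.ball 0 (r / c)} := by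
  intro ω (hω : ‖randomSum ξ f s ω‖ < r) k hk
  rw [mem_ball_zero_iff, Real.norm_eq_abs, lt_div_iff₀ hc]
  calc |ξ k ω| * c = |ξ k ω * f k (t k)| := by rw [hft, abs_mul, abs_of_pos hc]
    _ ≤ ‖randomSum ξ f s ω‖ := abs_mul_le_norm_randomSum ξ (hf (t k)) hk ω
    _ < r := hω

variable [MeasurableSpace Ω] {P : Measure Ω} {ξ : ι → Ω → ℝ}

lemma measurable_randomSum [TopologicalSpace E] [AddCommMonoid E] [Module ℝ E]
    [ContinuousAdd E] [ContinuousSMul ℝ E] [SecondCountableTopology E] [MeasurableSpace E]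
    [BorelSpace E] (hξ : ∀ k, Measurable (ξ k)) (f : ι → E) (s : Finset ι) :
    Measurable (randomSum ξ f s) :=
  Finset.measurable_fun_sum s fun k _ => (hξ k).smul_const (f k)

lemma hasGaussianLaw_randomSum (hξ : ∀ k, HasGaussianLaw (ξ k) P) (hind : iIndepFun ξ P)
    (a : ι → ℝ) (s : Finset ι) : HasGaussianLaw (randomSum ξ a s) P := by
  have h_joint : HasGaussianLaw (fun ω (k : s) => ξ k ω) P :=
    (hind.precomp Subtype.val_injective).hasGaussianLaw fun k => hξ k
  have h_eq : randomSum ξ a s = fun ω =>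
      (∑ k : s, a k • ContinuousLinearMap.proj (R := ℝ) (φ := fun _ : s => ℝ) k)
        fun k => ξ k ω := by
    ext ω
    simp only [randomSum, smul_eq_mul, FunLike.coe_sum, Finset.sum_apply, FunLike.coe_smul,
      Pi.smul_apply, ContinuousLinearMap.proj_apply, mul_comm (a _)]
    exact (Finset.sum_coe_sort s fun k => ξ k ω * a k).symm
  rw [h_eq]
  exact h_joint.map_fun _

lemma integral_randomSum_mul_randomSum [DecidableEq ι] (hξ : ∀ k, MemLp (ξ k) 2 P)
    (horth : ∀ k l, ∫ ω, ξ k ω * ξ l ω ∂P = if k = l then 1 else 0) (a b : ι → ℝ) (s : Finset ι) :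
    ∫ ω, randomSum ξ a s ω * randomSum ξ b s ω ∂P = ∑ k ∈ s, a k * b k := by
  have h_int (k l : ι) : Integrable (fun ω => (a k * b l) * (ξ k ω * ξ l ω)) P :=
    ((hξ k).integrable_mul (hξ l)).const_mul _
  have h_expand (ω : Ω) : randomSum ξ a s ω * randomSum ξ b s ω =
      ∑ k ∈ s, ∑ l ∈ s, (a k * b l) * (ξ k ω * ξ l ω) := by
    simp only [randomSum, smul_eq_mul, Finset.sum_mul_sum]
    exact Finset.sum_congr rfl fun k _ => Finset.sum_congr rfl fun l _ => by ring
  calc ∫ ω, randomSum ξ a s ω * randomSum ξ b s ω ∂P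
      = ∑ k ∈ s, ∑ l ∈ s, (a k * b l) * ∫ ω, ξ k ω * ξ l ω ∂P := by
        simp only [h_expand]
        rw [integral_finsetSum _ fun k _ => integrable_finsetSum _ fun l _ => h_int k l]
        refine Finset.sum_congr rfl fun k _ => ?_
        rw [integral_finsetSum _ fun l _ => h_int k l]
        simp only [integral_const_mul]
    _ = ∑ k ∈ s, a k * b k := by
        refine Finset.sum_congr rfl fun k hk => ?_
        simp [horth, hk]

lemma integral_randomSum_eq_zero (hξ : ∀ k, Integrable (ξ k) P) (hξ_mean : ∀ k, P[ξ k] = 0)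
    (a : ι → ℝ) (s : Finset ι) : P[randomSum ξ a s] = 0 := by
  simp only [randomSum, smul_eq_mul]
  rw [integral_finsetSum s fun k _ => (hξ k).mul_const (a k)]
  simp [integral_mul_const, hξ_mean]

section StandardGaussian

variable (hξ : ∀ k, HasLaw (ξ k) (gaussianReal 0 1) P)
include hξ

lemma exists_map_sum_mul_randomSum_eq_gaussianReal (hind : iIndepFun ξ P) {T : Type*}
    (f : ι → T → ℝ) (s : Finset ι) {κ : Type*} [Fintype κ] (c : κ → ℝ) (p : κ → T) :
    ∃ v : NNReal, P.map (fun ω => ∑ i, c i * randomSum ξ f s ω (p i)) = gaussianReal 0 v := by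
  have h_law (k : ι) : HasGaussianLaw (ξ k) P := (hξ k).hasGaussianLaw
  have h_mean (k : ι) : P[ξ k] = 0 := (hξ k).integral_eq.trans integral_id_gaussianReal
  let L : (T → ℝ) →ₗ[ℝ] ℝ := ∑ i, c i • LinearMap.proj (p i)
  have h_eq : (fun ω => ∑ i, c i * randomSum ξ f s ω (p i)) = randomSum ξ (fun k => L (f k)) s := by
    ext ω
    rw [← map_randomSum L]
    simp [L]
  refine ⟨Var[randomSum ξ (fun k => L (f k)) s; P].toNNReal, ?_⟩
  rw [h_eq, (hasGaussianLaw_randomSum h_law hind _ s).map_eq_gaussianReal,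
    integral_randomSum_eq_zero (fun k => (h_law k).integrable) h_mean]

lemma integral_mul_eq_ite [DecidableEq ι] (hind : iIndepFun ξ P) (k l : ι) :
    ∫ ω, ξ k ω * ξ l ω ∂P = if k = l then 1 else 0 := by
  have h_mean (k : ι) : ∫ ω, ξ k ω ∂P = 0 := (hξ k).integral_eq.trans integral_id_gaussianReal
  split_ifs with hkl
  · subst hkl
    have h_var : Var[ξ k; P] = 1 := by
      rw [(hξ k).variance_eq, variance_id_gaussianReal, NNReal.coe_one]
    rw [← h_var, variance_of_integral_eq_zero (hξ k).aemeasurable (h_mean k)]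
    simp only [pow_two]
  · rw [(hind.indepFun hkl).integral_fun_mul_eq_mul_integral
      (hξ k).aemeasurable.aestronglyMeasurable (hξ l).aemeasurable.aestronglyMeasurable,
      h_mean k, zero_mul]

lemma abs_integral_randomSum_mul_randomSum_le (hind : iIndepFun ξ P) {T : Type*} {f : ι → T → ℝ}
    {C : ℝ} (hfC : ∀ k x, |f k x| ≤ C) (hf : ∀ x, Pairwise fun k l => f k x * f l x = 0)
    (s : Finset ι) (x y : T) :
    |∫ ω, randomSum ξ f s ω x * randomSum ξ f s ω y ∂P| ≤ C ^ 2 := by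
  classical
  simp only [randomSum_apply]
  rw [integral_randomSum_mul_randomSum (fun k => (hξ k).hasGaussianLaw.memLp_two)
    (integral_mul_eq_ite hξ hind)]
  refine abs_sum_mul_le_of_pairwise_mul_eq_zero (hf y) (sq_nonneg C) (fun k => ?_) s
  calc |f k x * f k y| = |f k x| * |f k y| := abs_mul _ _
    _ ≤ C * C := by
      gcongr
      · exact (abs_nonneg _).trans (hfC k x)
      · exact hfC k x
      · exact hfC k y
    _ = C ^ 2 := (pow_two C).symm

end StandardGaussian

lemma exists_tendsto_measure_norm_randomSum_lt {ξ : ℕ → Ω → ℝ}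
    (hξ : ∀ k, HasLaw (ξ k) (gaussianReal 0 1) P) (hind : iIndepFun ξ P)
    {K : Type*} [TopologicalSpace K] [CompactSpace K] {f : ℕ → ℕ → C(K, ℝ)}
    (hf : ∀ n x, Pairwise fun k l => f n k x * f n l x = 0) {t : ℕ → ℕ → K} {c : ℕ → ℝ}
    (hc : ∀ n, 0 < c n) (hft : ∀ n k, f n k (t n k) = c n) (r : ℝ) :
    ∃ N : ℕ → ℕ, Tendsto (fun n => P {ω | ‖randomSum ξ (f n) (Finset.range (N n)) ω‖ < r})
      atTop (𝓝 0) := by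
  obtain ⟨N, hN⟩ := exists_tendsto_measure_forall_mem_range_mem hξ hind
    (S := fun n => Metric.ball 0 (r / c n)) (fun _ => measurableSet_ball) fun _ =>
      gaussianReal_lt_one_of_volume_ne_top 0 one_ne_zero measurableSet_ball measure_ball_lt_top.ne
  exact ⟨N, tendsto_of_tendsto_of_tendsto_of_le_of_le tendsto_const_nhds hN (fun _ => zero_le)
    fun n => measure_mono (setOf_norm_randomSum_lt_subset ξ (hf n) (hc n) (hft n) _ r)⟩

lemma exists_contDiff_tendsto_measure_norm_randomSum_lt {ξ : ℕ → Ω → ℝ}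
    (hξ : ∀ k, HasLaw (ξ k) (gaussianReal 0 1) P) (hind : iIndepFun ξ P)
    {V : Type*} [NormedAddCommGroup V] [NormedSpace ℝ V] [FiniteDimensional ℝ V] {K : Set V}
    [CompactSpace K] (hK : (interior K).Infinite) {c : ℕ → ℝ} (hc : ∀ n, 0 < c n) (r : ℝ) :
    ∃ (f : ℕ → ℕ → C(V, ℝ)) (N : ℕ → ℕ), (∀ n k, ContDiff ℝ (⊤ : ℕ∞) (f n k)) ∧
      (∀ n k x, |f n k x| ≤ c n) ∧ (∀ n x, Pairwise fun k l => f n k x * f n l x = 0) ∧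
      Tendsto (fun n =>
        P {ω | ‖randomSum ξ (fun k => (f n k).restrict K) (Finset.range (N n)) ω‖ < r})
        atTop (𝓝 0) := by
  choose f t hf_smooth hf_le hf_mul ht hft using fun n =>
    exists_contDiff_pairwise_mul_eq_zero isOpen_interior hK (hc n).le
  obtain ⟨N, hN⟩ := exists_tendsto_measure_norm_randomSum_lt hξ hind
    (f := fun n k => (f n k).restrict K) (fun n x => hf_mul n x)
    (t := fun n k => ⟨t n k, interior_subset (ht n k)⟩) hc hft r
  exact ⟨f, N, hf_smooth, hf_le, hf_mul, hN⟩

end RandomSum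

lemma iSup_ofReal_abs_eq_enorm {K : Type*} [TopologicalSpace K] [CompactSpace K] (f : C(K, ℝ)) :
    ⨆ x, ENNReal.ofReal |f x| = ‖f‖ₑ := by
  simp only [ContinuousMap.enorm_eq_iSup_enorm, Real.enorm_eq_ofReal_abs]

/-- There is a sequence `(X_n)` of centered real-valued Gaussian processes on `[0,1]`, with
almost surely smooth sample paths, whose covariance functions converge uniformly to `0` while
`P(sup_{[0,1]} |X_n| < 1) → 0`; in particular `liminf E[sup_{[0,1]} |X_n|] ≥ 1` and the laws of
`X_n` on `C([0,1],ℝ)` do not converge narrowly to the Dirac measure at the zero function. -/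
theorem exists_gaussian_counterexample_narrow_convergence :
    ∃ (Ω : Type) (_ : MeasurableSpace Ω) (P : Measure Ω) (_ : IsProbabilityMeasure P)
      (_ : MeasurableSpace C(Set.Icc (0:ℝ) 1, ℝ)) (_ : BorelSpace C(Set.Icc (0:ℝ) 1, ℝ))
      (X : ℕ → Ω → ℝ → ℝ) (Y : ℕ → Ω → C(Set.Icc (0:ℝ) 1, ℝ)),
      -- almost surely smooth sample paths
      (∀ n, ∀ᵐ ω ∂P, ContDiff ℝ (⊤ : ℕ∞) (X n ω)) ∧
      -- each `X n` is a centered Gaussian process on `[0,1]`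
      (∀ n (j : ℕ) (p : Fin j → ℝ), (∀ i, p i ∈ Set.Icc (0:ℝ) 1) →
        ∀ c : Fin j → ℝ, ∃ v : NNReal,
          P.map (fun ω => ∑ i, c i * X n ω (p i)) = gaussianReal 0 v) ∧
      -- `Y n` is the random element of `C([0,1],ℝ)` defined by `X n`
      (∀ n, Measurable (Y n)) ∧
      (∀ n, ∀ᵐ ω ∂P, ∀ t : Set.Icc (0:ℝ) 1, Y n ω t = X n ω t) ∧
      -- the covariance functions converge to `0` uniformly on `[0,1]²`
      (∀ ε : ℝ, 0 < ε → ∃ N : ℕ, ∀ n ≥ N, ∀ s ∈ Set.Icc (0:ℝ) 1, ∀ t ∈ Set.Icc (0:ℝ) 1,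
        |∫ ω, X n ω s * X n ω t ∂P| ≤ ε) ∧
      -- `P(sup_{[0,1]} |X_n| < 1) → 0`
      Tendsto (fun n => P {ω | ∀ t ∈ Set.Icc (0:ℝ) 1, |X n ω t| < 1}) atTop (𝓝 0) ∧
      -- `liminf E[sup_{[0,1]} |X_n|] ≥ 1`
      (1 : ℝ≥0∞) ≤ Filter.atTop.liminf
        (fun n => ∫⁻ ω, ⨆ t : Set.Icc (0:ℝ) 1, ENNReal.ofReal |X n ω t| ∂P) ∧
      -- the laws of `X_n` do not converge narrowly to `δ₀` on `C([0,1],ℝ)`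
      ¬ (∀ φ : BoundedContinuousFunction C(Set.Icc (0:ℝ) 1, ℝ) ℝ,
          Tendsto (fun n => ∫ ω, φ (Y n ω) ∂P) atTop (𝓝 (φ 0))) := by
  obtain ⟨Ω, _, P, ξ, hξ_meas, hξ, hind, _⟩ := exists_iid ℕ (gaussianReal 0 1)
  obtain ⟨c, -, hc_pos, hc⟩ := exists_seq_strictAnti_tendsto (0 : ℝ)
  obtain ⟨f, N, hf_smooth, hf_le, hf_mul, hN⟩ :=
    exists_contDiff_tendsto_measure_norm_randomSum_lt hξ hind (K := Set.Icc (0:ℝ) 1)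
      (by simpa only [interior_Icc] using Set.Ioo_infinite zero_lt_one) hc_pos 1
  let X (n : ℕ) : Ω → ℝ → ℝ := randomSum ξ (fun k => ⇑(f n k)) (Finset.range (N n))
  let Y (n : ℕ) : Ω → C(Set.Icc (0:ℝ) 1, ℝ) :=
    randomSum ξ (fun k => (f n k).restrict (Set.Icc 0 1)) (Finset.range (N n))
  have hY : Tendsto (fun n => P {ω | ‖Y n ω‖ < 1}) atTop (𝓝 0) := hN
  have hYX (n ω) (x : Set.Icc (0:ℝ) 1) : Y n ω x = X n ω x := randomSum_restrict_apply ξ _ _ ω x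
  borelize C(Set.Icc (0:ℝ) 1, ℝ)
  have hY_meas (n) : Measurable (Y n) := measurable_randomSum hξ_meas _ _
  refine ⟨Ω, inferInstance, P, inferInstance, inferInstance, inferInstance, X, Y,
    fun n => .of_forall fun ω => contDiff_randomSum ξ (fun k => hf_smooth n k) _ ω,
    fun n j p _ a => exists_map_sum_mul_randomSum_eq_gaussianReal hξ hind _ _ a p,
    hY_meas, fun n => .of_forall (hYX n), fun ε hε => ?_, ?_, ?_, ?_⟩
  · obtain ⟨M, hM⟩ := eventually_atTop.1 ((hc.pow 2).eventually_le_const (by simpa using hε))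
    exact ⟨M, fun n hn x _ y _ => (abs_integral_randomSum_mul_randomSum_le hξ hind (hf_le n)
      (hf_mul n) _ x y).trans (hM n hn)⟩
  · simpa only [ContinuousMap.norm_lt_iff _ one_pos, hYX, Real.norm_eq_abs, Subtype.forall] using hY
  · simp only [← hYX, iSup_ofReal_abs_eq_enorm]
    exact le_liminf_lintegral_of_tendsto_measure_lt (fun n => (hY_meas n).enorm.aemeasurable)
      (by simpa [← ofReal_norm] using hY)
  · exact not_forall_tendsto_integral_of_tendsto_measure_mem (fun n => (hY_meas n).aemeasurable)
      (Metric.ball_mem_nhds 0 one_pos) (by simpa only [mem_ball_zero_iff] using hY)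
end
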